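/- arXiv:math/9307205 — 3 statements merged into one kernel-verified Lean document; each statement's English description precedes it below -/
import Mathlib

section
/- The continuous q-Hermite polynomials are orthogonal with respect to ρ: for m ≠ n, ∫_{-1}^{1} H_n(x|q)·H_m(x|q)·ρ(x) dx = 0, and ∫_{-1}^{1} H_n(x|q)² ρ(x) dx = 2π (q;q)_n / (q;q)_∞. -/
open scoped Real

/-- The continuous q-Hermite polynomials of Rogers. -/
noncomputable def qHermite (q : ℝ) : ℕ → Polynomial ℝ
  | 0 => 1
  | 1 => Polynomial.C 2 * Polynomial.X
  | (n + 2) => Polynomial.C 2 * Polynomial.X * qHermite q (n + 1)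
      - Polynomial.C (1 - q ^ (n + 1)) * qHermite q n

/-- The q-Hermite weight function. -/
noncomputable def qWeight (q x : ℝ) : ℝ :=
  4 * Real.sqrt (1 - x ^ 2) *
    ∏' j : ℕ, (1 - 2 * (2 * x ^ 2 - 1) * q ^ (j + 1) + q ^ (2 * (j + 1)))

/-- `(q;q)_n = ∏_{j=1}^n (1 - q^j)`. -/
noncomputable def qPochN (q : ℝ) (m : ℕ) : ℝ := ∏ j ∈ Finset.range m, (1 - q ^ (j + 1))

/-- `(q;q)_∞ = ∏_{j=1}^∞ (1 - q^j)`. -/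
noncomputable def qPochInf (q : ℝ) : ℝ := ∏' j : ℕ, (1 - q ^ (j + 1))

/-!
Multiplication by a factor `1 - 2 (2 x ^ 2 - 1) q ^ j + q ^ (2 j)` of the weight acts on the
Chebyshev polynomials `U_i` by a three-term recurrence. Starting from the moments of `√(1 - x ^ 2)`,
this recurrence gives the moments of `U_i` against the weight truncated after `M` factors: by
Pascal's rule they are Gaussian binomials up to sign and a power of `q` (the finite form of Jacobi's
triple product). Letting `M → ∞`, the weight `ρ` annihilates `U_i` for odd `i` and gives `U_{2k}`
the moment `c θ_k`, with `c = 2π / (q; q)_∞` and `θ_k = (-1) ^ k q ^ (k (k + 1) / 2)`.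

The recurrence of `H_n` then shows that the moment of `H_n U_{n + 2k}` is `c θ_k (q ^ (k + 1); q)_n`
and that `H_n` is orthogonal to `U_j` for `j < n`, hence to every polynomial of degree less than
`n`. Since `H_n - U_n` is such a polynomial, the squared norm of `H_n` is the moment `c (q; q)_n` of
`H_n U_n`.
-/

open Polynomial Filter Topology

section GaussianBinomial

variable {R : Type*} [CommRing R]

/-- The Gaussian binomial coefficient `[n; k]_q`, defined by Pascal's rule so that it makes sense
over any ring and vanishes for `n < k`. -/
def gaussBinom (q : R) : ℕ → ℕ → R
  | _, 0 => 1
  | 0, _ + 1 => 0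
  | n + 1, k + 1 => gaussBinom q n k + q ^ (k + 1) * gaussBinom q n (k + 1)

@[simp]
lemma gaussBinom_zero_right (q : R) (n : ℕ) : gaussBinom q n 0 = 1 := by
  cases n <;> rfl

lemma gaussBinom_succ_succ (q : R) (n k : ℕ) :
    gaussBinom q (n + 1) (k + 1) = gaussBinom q n k + q ^ (k + 1) * gaussBinom q n (k + 1) :=
  rfl

lemma gaussBinom_eq_zero_of_lt (q : R) {n k : ℕ} (h : n < k) : gaussBinom q n k = 0 := by
  induction n generalizing k with
  | zero => obtain ⟨k, rfl⟩ := Nat.exists_eq_add_of_lt h; rfl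
  | succ n ih =>
    obtain ⟨k, rfl⟩ := Nat.exists_eq_succ_of_ne_zero (Nat.ne_zero_of_lt h)
    rw [gaussBinom_succ_succ, ih (by lia), ih (by lia), mul_zero, add_zero]

lemma pow_mul_gaussBinom_congr (q : R) {a b n k : ℕ} (h : k ≤ n → a = b) :
    q ^ a * gaussBinom q n k = q ^ b * gaussBinom q n k := by
  rcases lt_or_ge n k with hnk | hkn
  · simp only [gaussBinom_eq_zero_of_lt q hnk, mul_zero]
  · rw [h hkn]

lemma one_sub_pow_mul_gaussBinom_succ (q : R) (n k : ℕ) :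
    (1 - q ^ (k + 1)) * gaussBinom q n (k + 1) = (1 - q ^ (n - k)) * gaussBinom q n k := by
  induction n generalizing k with
  | zero => simp [gaussBinom_eq_zero_of_lt]
  | succ n ih =>
    cases k with
    | zero =>
      have h := ih 0
      simp only [zero_add, pow_one, tsub_zero, gaussBinom_zero_right, gaussBinom_succ_succ] at h ⊢
      linear_combination q * h
    | succ k =>
      have hpow : q ^ (k + 2 + (n - (k + 1))) * gaussBinom q n (k + 1) =
          q ^ (k + 1 + (n - k)) * gaussBinom q n (k + 1) :=
        pow_mul_gaussBinom_congr q fun hk => by lia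
      rw [gaussBinom_succ_succ, gaussBinom_succ_succ, Nat.add_sub_add_right]
      linear_combination q ^ (k + 2) * ih (k + 1) + ih k - hpow

lemma gaussBinom_succ_succ' (q : R) (n k : ℕ) :
    gaussBinom q (n + 1) (k + 1) = q ^ (n - k) * gaussBinom q n k + gaussBinom q n (k + 1) := by
  linear_combination gaussBinom_succ_succ q n k - one_sub_pow_mul_gaussBinom_succ q n k

lemma gaussBinom_add_two_add_two (q : R) (n k : ℕ) :
    gaussBinom q (n + 2) (k + 2) = q ^ (n - k) * gaussBinom q n k
      + (1 + q ^ (n + 1)) * gaussBinom q n (k + 1) + q ^ (k + 2) * gaussBinom q n (k + 2) := by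
  have hpow : q ^ (k + 2 + (n - (k + 1))) * gaussBinom q n (k + 1) =
      q ^ (n + 1) * gaussBinom q n (k + 1) := pow_mul_gaussBinom_congr q fun hk => by lia
  rw [gaussBinom_succ_succ, gaussBinom_succ_succ', gaussBinom_succ_succ' q n (k + 1)]
  linear_combination hpow

lemma gaussBinom_self (q : R) (n : ℕ) : gaussBinom q n n = 1 := by
  induction n with
  | zero => rfl
  | succ n ih =>
    rw [gaussBinom_succ_succ, ih, gaussBinom_eq_zero_of_lt q n.lt_succ_self, mul_zero, add_zero]

lemma gaussBinom_symm_add (q : R) (k l : ℕ) :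
    gaussBinom q (k + l) k = gaussBinom q (k + l) l := by
  induction k generalizing l with
  | zero => simp [gaussBinom_self]
  | succ k ihk =>
    induction l with
    | zero => simp [gaussBinom_self]
    | succ l ihl =>
      have hk := ihk (l + 1)
      rw [← add_assoc, gaussBinom_succ_succ, gaussBinom_succ_succ', Nat.add_sub_cancel, ihl,
        show k + 1 + l = k + (l + 1) by ring, hk]
      ring

end GaussianBinomial

section QFactorial

variable {q : ℝ}

lemma qPochN_succ (q : ℝ) (n : ℕ) : qPochN q (n + 1) = qPochN q n * (1 - q ^ (n + 1)) :=
  Finset.prod_range_succ _ _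

lemma gaussBinom_add_mul_qPochN_mul_qPochN (q : ℝ) (k l : ℕ) :
    gaussBinom q (k + l) k * (qPochN q k * qPochN q l) = qPochN q (k + l) := by
  induction k generalizing l with
  | zero => simp [qPochN]
  | succ k ih =>
    have hn : k + 1 + l = k + (l + 1) := by lia
    have habs := one_sub_pow_mul_gaussBinom_succ q (k + (l + 1)) k
    rw [Nat.add_sub_cancel_left] at habs
    rw [hn, ← ih (l + 1), qPochN_succ, qPochN_succ]
    linear_combination qPochN q k * qPochN q l * habs

lemma one_sub_pow_succ_ne_zero (hq : |q| < 1) (j : ℕ) : 1 - q ^ (j + 1) ≠ 0 := by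
  have h : |q ^ (j + 1)| < 1 := by
    rw [abs_pow]
    exact pow_lt_one₀ (abs_nonneg q) hq j.succ_ne_zero
  exact (sub_pos.2 (abs_lt.1 h).2).ne'

lemma summable_abs_pow_succ (hq : |q| < 1) : Summable fun j : ℕ => |q| ^ (j + 1) :=
  (summable_nat_add_iff 1).2 (summable_geometric_of_lt_one (abs_nonneg q) hq)

lemma summable_norm_neg_pow_succ (hq : |q| < 1) : Summable fun j : ℕ => ‖-q ^ (j + 1)‖ := by
  simpa only [norm_neg, norm_pow, Real.norm_eq_abs] using summable_abs_pow_succ hq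

lemma tendsto_qPochN (hq : |q| < 1) : Tendsto (qPochN q) atTop (𝓝 (qPochInf q)) :=
  (multipliable_one_add_of_summable (summable_norm_neg_pow_succ hq)).hasProd.tendsto_prod_nat

lemma qPochInf_ne_zero (hq : |q| < 1) : qPochInf q ≠ 0 :=
  tprod_one_add_ne_zero_of_summable (f := fun j : ℕ => -q ^ (j + 1))
    (one_sub_pow_succ_ne_zero hq) (summable_norm_neg_pow_succ hq)

lemma qPochN_ne_zero (hq : |q| < 1) (n : ℕ) : qPochN q n ≠ 0 :=
  Finset.prod_ne_zero_iff.2 fun j _ => one_sub_pow_succ_ne_zero hq j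

lemma gaussBinom_add_eq_div (hq : |q| < 1) (k l : ℕ) :
    gaussBinom q (k + l) k = qPochN q (k + l) / (qPochN q k * qPochN q l) :=
  eq_div_of_mul_eq (mul_ne_zero (qPochN_ne_zero hq k) (qPochN_ne_zero hq l))
    (gaussBinom_add_mul_qPochN_mul_qPochN q k l)

lemma tendsto_gaussBinom_add (hq : |q| < 1) {ι : Type*} {F : Filter ι} {k l : ι → ℕ}
    (hk : Tendsto k F atTop) (hl : Tendsto l F atTop) :
    Tendsto (fun i => gaussBinom q (k i + l i) (k i)) F (𝓝 (qPochInf q)⁻¹) := by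
  have hP := tendsto_qPochN hq
  have hP0 := qPochInf_ne_zero hq
  have h := (hP.comp (tendsto_atTop_mono (fun i => Nat.le_add_right (k i) (l i)) hk)).div
    ((hP.comp hk).mul (hP.comp hl)) (mul_ne_zero hP0 hP0)
  rw [div_mul_cancel_left₀ hP0] at h
  exact h.congr fun i => (gaussBinom_add_eq_div hq _ _).symm

end QFactorial

section TruncatedMoments

variable {R : Type*} [CommRing R] {q : R} {L : R[X] →ₗ[R] R}

/-- The coefficient of `w ^ (-k)`, for `0 ≤ k`, in Jacobi's triple product
`∏ j ≥ 1, (1 - q ^ j) (1 - q ^ (j - 1) w) (1 - q ^ j / w)`. -/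
def thetaCoeff (q : R) (k : ℕ) : R := (-1) ^ k * q ^ (k + 1).choose 2

lemma thetaCoeff_zero (q : R) : thetaCoeff q 0 = 1 := by simp [thetaCoeff]

lemma thetaCoeff_succ (q : R) (k : ℕ) :
    thetaCoeff q (k + 1) = -(q ^ (k + 1) * thetaCoeff q k) := by
  rw [thetaCoeff, thetaCoeff, Nat.choose_succ_succ' (k + 1) 1, Nat.choose_one_right]
  ring

/-- The `M`-th partial product of the weight, without the factor `4 √(1 - x ^ 2)`. -/
noncomputable def weightPoly (q : R) (M : ℕ) : R[X] :=
  ∏ j ∈ Finset.range M, (1 - C (q ^ (j + 1)) * (2 * (2 * X ^ 2 - 1)) + C (q ^ (2 * (j + 1))))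

lemma two_mul_X_mul_U (j : ℤ) :
    2 * X * Chebyshev.U R j = Chebyshev.U R (j + 1) + Chebyshev.U R (j - 1) := by
  rw [Chebyshev.U_add_one]; ring

lemma two_mul_two_mul_X_sq_sub_one_mul_U (j : ℤ) :
    2 * (2 * X ^ 2 - 1) * Chebyshev.U R j = Chebyshev.U R (j + 2) + Chebyshev.U R (j - 2) := by
  rw [Chebyshev.U_add_two, Chebyshev.U_sub_two]
  linear_combination 2 * X * two_mul_X_mul_U (R := R) j

lemma map_C_mul (L : R[X] →ₗ[R] R) (a : R) (p : R[X]) : L (C a * p) = a * L p := by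
  rw [← smul_eq_C_mul, map_smul, smul_eq_mul]

lemma map_weightPoly_succ_mul_U (q : R) (L : R[X] →ₗ[R] R) (M : ℕ) (j : ℤ) :
    L (weightPoly q (M + 1) * Chebyshev.U R j) =
      (1 + q ^ (2 * (M + 1))) * L (weightPoly q M * Chebyshev.U R j)
        - q ^ (M + 1) * (L (weightPoly q M * Chebyshev.U R (j + 2))
          + L (weightPoly q M * Chebyshev.U R (j - 2))) := by
  rw [← map_add, ← mul_add, ← two_mul_two_mul_X_sq_sub_one_mul_U, ← map_C_mul, ← map_C_mul,
    ← map_sub, weightPoly, Finset.prod_range_succ, ← weightPoly, C_add, C_1]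
  congr 1
  ring

lemma map_weightPoly_mul_U_of_odd (hL : ∀ j : ℤ, Odd j → L (Chebyshev.U R j) = 0)
    (M : ℕ) {j : ℤ} (hj : Odd j) : L (weightPoly q M * Chebyshev.U R j) = 0 := by
  induction M generalizing j with
  | zero => simpa [weightPoly] using hL j hj
  | succ M ih =>
    rw [map_weightPoly_succ_mul_U, ih hj, ih (hj.add_even even_two), ih (hj.sub_even even_two)]
    ring

lemma map_weightPoly_mul_U_two_mul (q : R)
    (hL : ∀ k : ℕ, k ≠ 0 → L (Chebyshev.U R (2 * k)) = 0) (M k : ℕ) :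
    L (weightPoly q M * Chebyshev.U R (2 * k)) =
      L 1 * (thetaCoeff q k * gaussBinom q (2 * M + 1) (M + k + 1)) := by
  induction M generalizing k with
  | zero =>
    rcases eq_or_ne k 0 with rfl | hk
    · simp [weightPoly, thetaCoeff_zero, gaussBinom]
    · simp [weightPoly, hL k hk, gaussBinom_eq_zero_of_lt q (show 1 < k + 1 by lia)]
  | succ M ih =>
    have hpascal := gaussBinom_add_two_add_two q (2 * M + 1) (M + k)
    have hnext : (2 * (k : ℤ) + 2) = 2 * (k + 1 : ℕ) := by push_cast; ring
    rw [map_weightPoly_succ_mul_U, hnext, ih, ih, thetaCoeff_succ,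
      show 2 * (M + 1) + 1 = 2 * M + 1 + 2 by ring, show M + 1 + k + 1 = M + k + 2 by ring, hpascal]
    cases k with
    | zero =>
      have hreflect : Chebyshev.U R (2 * (0 : ℕ) - 2) = -Chebyshev.U R (2 * (0 : ℕ)) := by simp
      have hsymm : gaussBinom q (2 * M + 1) M = gaussBinom q (2 * M + 1) (M + 1) := by
        rw [show 2 * M + 1 = M + (M + 1) by ring, gaussBinom_symm_add]
      rw [hreflect, mul_neg, map_neg, ih]
      simp only [add_zero, hsymm, show 2 * M + 1 - M = M + 1 by lia]
      ring
    | succ k =>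
      have hprev : (2 * ((k + 1 : ℕ) : ℤ) - 2) = 2 * k := by push_cast; ring
      have hpow : q ^ (k + 1 + (2 * M + 1 - (M + (k + 1)))) * gaussBinom q (2 * M + 1) (M + (k + 1))
          = q ^ (M + 1) * gaussBinom q (2 * M + 1) (M + (k + 1)) :=
        pow_mul_gaussBinom_congr q fun _ => by lia
      rw [hprev, ih, thetaCoeff_succ, add_assoc M k 1]
      linear_combination L 1 * thetaCoeff q k * hpow

lemma tendsto_map_weightPoly_mul_U_two_mul {q : ℝ} {L : ℝ[X] →ₗ[ℝ] ℝ} (hq : |q| < 1)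
    (hL : ∀ k : ℕ, k ≠ 0 → L (Chebyshev.U ℝ (2 * k)) = 0) (k : ℕ) :
    Tendsto (fun M => L (weightPoly q M * Chebyshev.U ℝ (2 * k))) atTop
      (𝓝 (L 1 / qPochInf q * thetaCoeff q k)) := by
  have hbinom : Tendsto (fun l => gaussBinom q (l + (2 * k + 1) + l) (l + (2 * k + 1))) atTop
      (𝓝 (qPochInf q)⁻¹) :=
    tendsto_gaussBinom_add hq (tendsto_add_atTop_nat _) tendsto_id
  rw [← tendsto_add_atTop_iff_nat k]
  convert (hbinom.const_mul (thetaCoeff q k)).const_mul (L 1) using 2 with l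
  · rw [map_weightPoly_mul_U_two_mul q hL]
    congr 3 <;> ring
  · ring

end TruncatedMoments

section Functional

/-- The `q`-shifted factorial `(a; q)_n`. -/
def qShiftedFactorial {R : Type*} [CommRing R] (a q : R) (n : ℕ) : R :=
  ∏ i ∈ Finset.range n, (1 - a * q ^ i)

lemma qShiftedFactorial_succ {R : Type*} [CommRing R] (a q : R) (n : ℕ) :
    qShiftedFactorial a q (n + 1) = qShiftedFactorial a q n * (1 - a * q ^ n) :=
  Finset.prod_range_succ _ _

lemma qShiftedFactorial_succ' {R : Type*} [CommRing R] (a q : R) (n : ℕ) :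
    qShiftedFactorial a q (n + 1) = (1 - a) * qShiftedFactorial (a * q) q n := by
  simp only [qShiftedFactorial, Finset.prod_range_succ', pow_zero, mul_one, pow_succ',
    mul_assoc, mul_comm (1 - a)]

lemma qShiftedFactorial_self (q : ℝ) (n : ℕ) : qShiftedFactorial q q n = qPochN q n := by
  simp only [qShiftedFactorial, qPochN, pow_succ']

variable {q c : ℝ} {L : ℝ[X] →ₗ[ℝ] ℝ}

lemma qHermite_zero (q : ℝ) : qHermite q 0 = 1 := rfl

lemma qHermite_one (q : ℝ) : qHermite q 1 = 2 * X := rfl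

lemma qHermite_add_two (q : ℝ) (n : ℕ) :
    qHermite q (n + 2) = 2 * X * qHermite q (n + 1) - C (1 - q ^ (n + 1)) * qHermite q n := rfl

lemma map_qHermite_one_mul_U (q : ℝ) (L : ℝ[X] →ₗ[ℝ] ℝ) (j : ℤ) :
    L (qHermite q 1 * Chebyshev.U ℝ j) = L (Chebyshev.U ℝ (j + 1)) + L (Chebyshev.U ℝ (j - 1)) := by
  rw [qHermite_one, two_mul_X_mul_U, map_add]

lemma map_qHermite_add_two_mul_U (q : ℝ) (L : ℝ[X] →ₗ[ℝ] ℝ) (n : ℕ) (j : ℤ) :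
    L (qHermite q (n + 2) * Chebyshev.U ℝ j) =
      L (qHermite q (n + 1) * Chebyshev.U ℝ (j + 1))
        + L (qHermite q (n + 1) * Chebyshev.U ℝ (j - 1))
        - (1 - q ^ (n + 1)) * L (qHermite q n * Chebyshev.U ℝ j) := by
  rw [← map_C_mul, ← map_add, ← map_sub, ← mul_add, ← two_mul_X_mul_U, qHermite_add_two]
  congr 1
  ring

lemma map_qHermite_mul_U_of_odd (hodd : ∀ j : ℤ, Odd j → L (Chebyshev.U ℝ j) = 0)
    (n : ℕ) {j : ℤ} (hj : Odd (n + j)) : L (qHermite q n * Chebyshev.U ℝ j) = 0 := by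
  induction n using Nat.twoStepInduction generalizing j with
  | zero => simpa [qHermite_zero] using hodd j (by simpa using hj)
  | one =>
    rw [map_qHermite_one_mul_U, hodd _ (by grind), hodd _ (by grind), add_zero]
  | more n ih₀ ih₁ =>
    rw [map_qHermite_add_two_mul_U, ih₀ (by grind), ih₁ (by grind), ih₁ (by grind)]
    ring

lemma map_qHermite_mul_U_add_two_mul
    (heven : ∀ k : ℕ, L (Chebyshev.U ℝ (2 * k)) = c * thetaCoeff q k) (n k : ℕ) :
    L (qHermite q n * Chebyshev.U ℝ (n + 2 * k)) =
      c * thetaCoeff q k * qShiftedFactorial (q ^ (k + 1)) q n := by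
  induction n using Nat.twoStepInduction generalizing k with
  | zero => simp [qHermite_zero, qShiftedFactorial, heven]
  | one =>
    have hup : ((1 : ℕ) + 2 * k + 1 : ℤ) = 2 * (k + 1 : ℕ) := by push_cast; ring
    have hdown : ((1 : ℕ) + 2 * k - 1 : ℤ) = 2 * k := by push_cast; ring
    rw [map_qHermite_one_mul_U, hup, hdown, heven, heven, thetaCoeff_succ]
    simp only [qShiftedFactorial, Finset.prod_range_one, pow_zero]
    ring
  | more n ih₀ ih₁ =>
    have hup : ((n + 2 : ℕ) + 2 * k + 1 : ℤ) = (n + 1 : ℕ) + 2 * (k + 1 : ℕ) := by push_cast; ring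
    have hdown : ((n + 2 : ℕ) + 2 * k - 1 : ℤ) = (n + 1 : ℕ) + 2 * k := by push_cast; ring
    have hsame : ((n + 2 : ℕ) + 2 * k : ℤ) = n + 2 * (k + 1 : ℕ) := by push_cast; ring
    rw [map_qHermite_add_two_mul_U, hup, hdown, hsame, ih₀, ih₁, ih₁, thetaCoeff_succ,
      qShiftedFactorial_succ' (q ^ (k + 1)) q (n + 1), qShiftedFactorial_succ' (q ^ (k + 1)) q n,
      ← pow_succ, qShiftedFactorial_succ]
    ring

lemma map_qHermite_mul_U_self
    (heven : ∀ k : ℕ, L (Chebyshev.U ℝ (2 * k)) = c * thetaCoeff q k) (n : ℕ) :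
    L (qHermite q n * Chebyshev.U ℝ n) = c * qPochN q n := by
  simpa [thetaCoeff_zero, qShiftedFactorial_self] using map_qHermite_mul_U_add_two_mul heven n 0

lemma map_qHermite_mul_U_of_lt (hodd : ∀ j : ℤ, Odd j → L (Chebyshev.U ℝ j) = 0)
    (heven : ∀ k : ℕ, L (Chebyshev.U ℝ (2 * k)) = c * thetaCoeff q k) {n : ℕ} {j : ℤ}
    (hj : -1 ≤ j) (hjn : j < n) : L (qHermite q n * Chebyshev.U ℝ j) = 0 := by
  induction n using Nat.twoStepInduction generalizing j with
  | zero =>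
    obtain rfl : j = -1 := by lia
    simp
  | one =>
    obtain rfl | rfl : j = -1 ∨ j = 0 := by lia
    · simp
    · exact map_qHermite_mul_U_of_odd hodd 1 (by simp)
  | more n ih₀ ih₁ =>
    rcases hj.eq_or_lt with rfl | hj
    · simp
    rcases (show j < n ∨ j = n ∨ j = n + 1 by lia) with hlt | rfl | rfl
    · rw [map_qHermite_add_two_mul_U, ih₀ hj.le hlt, ih₁ (by lia) (by lia),
        ih₁ (by lia) (by lia)]
      ring
    · have hdiag := map_qHermite_mul_U_self heven (n + 1)
      push_cast at hdiag
      rw [map_qHermite_add_two_mul_U, hdiag, ih₁ (by lia) (by lia),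
        map_qHermite_mul_U_self heven, qPochN_succ]
      ring
    · exact map_qHermite_mul_U_of_odd hodd _ (by grind)

/-- The Chebyshev polynomials of the second kind as a polynomial sequence: `U_n` has degree `n`. -/
noncomputable def chebyshevUSequence (R : Type*) [CommRing R] [IsDomain R] [NeZero (2 : R)] :
    Polynomial.Sequence R where
  elems' n := Chebyshev.U R n
  degree_eq' n := Chebyshev.degree_U_natCast R n

lemma span_chebyshevU (K : Type*) [Field K] [NeZero (2 : K)] (n : ℕ) :
    Submodule.span K ((fun j : ℕ => Chebyshev.U K j) '' Set.Iio n) = degreeLT K n :=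
  (chebyshevUSequence K).span_degreeLT fun j _ =>
    (leadingCoeff_ne_zero.2 ((chebyshevUSequence K).ne_zero j)).isUnit

lemma map_qHermite_mul_of_degree_lt (hodd : ∀ j : ℤ, Odd j → L (Chebyshev.U ℝ j) = 0)
    (heven : ∀ k : ℕ, L (Chebyshev.U ℝ (2 * k)) = c * thetaCoeff q k) {n : ℕ} {p : ℝ[X]}
    (hp : p.degree < n) : L (qHermite q n * p) = 0 := by
  rw [← mem_degreeLT, ← span_chebyshevU] at hp
  induction hp using Submodule.span_induction with
  | mem _ hU =>
    obtain ⟨j, hj, rfl⟩ := hU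
    exact map_qHermite_mul_U_of_lt hodd heven (by lia) (by exact_mod_cast hj)
  | zero => rw [mul_zero, map_zero]
  | add _ _ _ _ hp hp' => rw [mul_add, map_add, hp, hp', add_zero]
  | smul a _ _ hp => rw [mul_smul_comm, map_smul, hp, smul_zero]

lemma degree_qHermite_sub_U_lt (q : ℝ) (n : ℕ) :
    (qHermite q n - Chebyshev.U ℝ n).degree < n := by
  induction n using Nat.twoStepInduction with
  | zero => simp [qHermite_zero]
  | one => simp [qHermite_one]
  | more n ih₀ ih₁ =>
    have hrec : qHermite q (n + 2) - Chebyshev.U ℝ (n + 2 : ℕ) =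
        C 2 * X * (qHermite q (n + 1) - Chebyshev.U ℝ (n + 1 : ℕ))
          - C (1 - q ^ (n + 1)) * (qHermite q n - Chebyshev.U ℝ n)
          + C (q ^ (n + 1)) * Chebyshev.U ℝ n := by
      push_cast
      rw [qHermite_add_two, Chebyshev.U_add_two, C_sub, C_1, C_ofNat]
      ring
    have hn : (n : WithBot ℕ) < (n + 2 : ℕ) := by exact_mod_cast (by lia : n < n + 2)
    rw [hrec]
    refine (degree_add_le _ _).trans_lt (max_lt ((degree_sub_le _ _).trans_lt (max_lt ?_ ?_)) ?_)
    · rw [mul_assoc, degree_C_mul two_ne_zero, degree_mul, degree_X, add_comm]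
      exact WithBot.add_lt_add_right WithBot.one_ne_bot ih₁
    · exact ((degree_mul_le _ _).trans (add_le_of_nonpos_left degree_C_le)).trans_lt (ih₀.trans hn)
    · refine ((degree_mul_le _ _).trans (add_le_of_nonpos_left degree_C_le)).trans_lt ?_
      rwa [Chebyshev.degree_U_natCast]

lemma degree_qHermite (q : ℝ) (n : ℕ) : (qHermite q n).degree = n := by
  have hlt : (qHermite q n - Chebyshev.U ℝ n).degree < (Chebyshev.U ℝ n).degree := by
    rw [Chebyshev.degree_U_natCast]
    exact degree_qHermite_sub_U_lt q n
  rw [← sub_add_cancel (qHermite q n), degree_add_eq_right_of_degree_lt hlt,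
    Chebyshev.degree_U_natCast]

theorem map_qHermite_mul_qHermite_of_ne (hodd : ∀ j : ℤ, Odd j → L (Chebyshev.U ℝ j) = 0)
    (heven : ∀ k : ℕ, L (Chebyshev.U ℝ (2 * k)) = c * thetaCoeff q k) {n m : ℕ} (hnm : n ≠ m) :
    L (qHermite q n * qHermite q m) = 0 := by
  wlog hlt : m < n generalizing n m
  · rw [mul_comm]
    exact this hnm.symm (hnm.lt_of_le (not_lt.1 hlt))
  exact map_qHermite_mul_of_degree_lt hodd heven (by rw [degree_qHermite]; exact_mod_cast hlt)

theorem map_qHermite_mul_self (hodd : ∀ j : ℤ, Odd j → L (Chebyshev.U ℝ j) = 0)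
    (heven : ∀ k : ℕ, L (Chebyshev.U ℝ (2 * k)) = c * thetaCoeff q k) (n : ℕ) :
    L (qHermite q n * qHermite q n) = c * qPochN q n := by
  have hsub := map_qHermite_mul_of_degree_lt hodd heven (degree_qHermite_sub_U_lt q n)
  rwa [mul_sub, map_sub, map_qHermite_mul_U_self heven, sub_eq_zero] at hsub

end Functional

section Integral

open MeasureTheory Set

/-- The moment functional of a weight `w` on an interval, as a linear form on polynomials. -/
noncomputable def weightedIntegral {a b : ℝ} (w : ℝ → ℝ) (hw : IntervalIntegrable w volume a b) :
    ℝ[X] →ₗ[ℝ] ℝ where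
  toFun p := ∫ x in a..b, p.eval x * w x
  map_add' p r := by
    simp only [eval_add, add_mul]
    exact intervalIntegral.integral_add (hw.continuousOn_mul p.continuousOn)
      (hw.continuousOn_mul r.continuousOn)
  map_smul' t p := by
    simp only [eval_smul, smul_eq_mul, mul_assoc, intervalIntegral.integral_const_mul,
      RingHom.id_apply]

lemma tendstoUniformlyOn_mul_left {α ι A : Type*} [TopologicalSpace α] [SeminormedRing A]
    {l : Filter ι} {K : Set α} {g f : α → A} {F : ι → α → A} (hK : IsCompact K)
    (hg : ContinuousOn g K) (hF : TendstoUniformlyOn F f l K) :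
    TendstoUniformlyOn (fun i x => g x * F i x) (fun x => g x * f x) l K := by
  obtain ⟨C, hC⟩ := hK.exists_bound_of_continuousOn hg
  rw [Metric.tendstoUniformlyOn_iff] at hF ⊢
  intro ε hε
  have hC' : 0 < |C| + 1 := by positivity
  filter_upwards [hF (ε / (|C| + 1)) (by positivity)] with i hi x hx
  calc dist (g x * f x) (g x * F i x)
      ≤ ‖g x‖ * dist (f x) (F i x) := by
        rw [dist_eq_norm, ← mul_sub, dist_eq_norm]
        exact norm_mul_le _ _
    _ ≤ (|C| + 1) * dist (f x) (F i x) := by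
        gcongr
        linarith [hC x hx, le_abs_self C]
    _ < ε := (lt_div_iff₀' hC').1 (hi x hx)

lemma two_mul_one_sub_X_sq_mul_U {R : Type*} [CommRing R] (j : ℤ) :
    2 * (1 - X ^ 2) * Chebyshev.U R j = Chebyshev.T R j - Chebyshev.T R (j + 2) := by
  rw [mul_assoc, Chebyshev.one_sub_X_sq_mul_U_eq_pol_in_T, Chebyshev.T_add_two]
  ring

lemma integral_U_mul_sqrt_one_sub_sq_eq_zero {j : ℤ} (hj : j ≠ 0) (hj' : j ≠ -2) :
    ∫ x in (-1 : ℝ)..1, (Chebyshev.U ℝ j).eval x * √(1 - x ^ 2) = 0 := by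
  have hT : ∫ x, (Chebyshev.T ℝ j - Chebyshev.T ℝ (j + 2)).eval x ∂Chebyshev.measureT = 0 := by
    simp only [eval_sub]
    rw [integral_sub (Chebyshev.integrable_measureT (Polynomial.continuousOn _))
      (Chebyshev.integrable_measureT (Polynomial.continuousOn _)),
      Chebyshev.integral_eval_T_real_measureT_of_ne_zero hj,
      Chebyshev.integral_eval_T_real_measureT_of_ne_zero (by lia), sub_zero]
  rw [← two_mul_one_sub_X_sq_mul_U, Chebyshev.integral_measureT] at hT
  rw [← mul_eq_zero_iff_left (two_ne_zero' ℝ), ← intervalIntegral.integral_const_mul, ← hT]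
  congr 1 with x
  rw [← Real.div_sqrt (x := 1 - x ^ 2), Real.sqrt_inv]
  simp only [eval_mul, eval_sub, eval_pow, eval_X, eval_one, eval_ofNat]
  ring

/-- The moment functional of the semicircle factor `4 √(1 - x ^ 2)` of the weight `qWeight q`. -/
noncomputable def semicircleFunctional : ℝ[X] →ₗ[ℝ] ℝ :=
  weightedIntegral (a := -1) (b := 1) (fun x => 4 * √(1 - x ^ 2))
    (Continuous.intervalIntegrable (by fun_prop) _ _)

lemma semicircleFunctional_apply (p : ℝ[X]) :
    semicircleFunctional p = ∫ x in (-1 : ℝ)..1, p.eval x * (4 * √(1 - x ^ 2)) :=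
  rfl

lemma semicircleFunctional_U_eq_zero {j : ℤ} (hj : j ≠ 0) (hj' : j ≠ -2) :
    semicircleFunctional (Chebyshev.U ℝ j) = 0 := by
  simp only [semicircleFunctional_apply, mul_left_comm _ (4 : ℝ),
    intervalIntegral.integral_const_mul, integral_U_mul_sqrt_one_sub_sq_eq_zero hj hj', mul_zero]

lemma semicircleFunctional_one : semicircleFunctional 1 = 2 * π := by
  simp only [semicircleFunctional_apply, eval_one, one_mul, intervalIntegral.integral_const_mul,
    integral_sqrt_one_sub_sq]
  ring

variable {q : ℝ}

lemma abs_weight_factor_sub_one_le (hq : |q| ≤ 1) {x : ℝ} (hx : x ∈ Icc (-1 : ℝ) 1) (j : ℕ) :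
    |-2 * (2 * x ^ 2 - 1) * q ^ j + q ^ (2 * j)| ≤ 3 * |q| ^ j := by
  have hx2 : x ^ 2 ≤ 1 := sq_le_one_iff_abs_le_one x |>.2 (abs_le.2 hx)
  have hcos : |2 * x ^ 2 - 1| ≤ 1 := abs_le.2 ⟨by nlinarith, by linarith⟩
  have hpow : |q| ^ (2 * j) ≤ |q| ^ j := pow_le_pow_of_le_one (abs_nonneg q) hq (by lia)
  calc |-2 * (2 * x ^ 2 - 1) * q ^ j + q ^ (2 * j)|
      ≤ 2 * |2 * x ^ 2 - 1| * |q| ^ j + |q| ^ (2 * j) := by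
        refine (abs_add_le _ _).trans_eq ?_
        simp only [abs_mul, abs_neg, abs_pow, Nat.abs_ofNat]
    _ ≤ 2 * 1 * |q| ^ j + |q| ^ j := by gcongr
    _ = 3 * |q| ^ j := by ring

lemma eval_weightPoly (q : ℝ) (M : ℕ) (x : ℝ) :
    (weightPoly q M).eval x = ∏ j ∈ Finset.range M,
      (1 + (-2 * (2 * x ^ 2 - 1) * q ^ (j + 1) + q ^ (2 * (j + 1)))) := by
  rw [weightPoly, eval_prod]
  refine Finset.prod_congr rfl fun j _ => ?_
  simp only [map_pow, eval_add, eval_sub, eval_one, eval_mul, eval_pow, eval_C, eval_ofNat, eval_X]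
  ring

lemma tendstoUniformlyOn_eval_weightPoly (hq : |q| < 1) :
    TendstoUniformlyOn (fun M x => (weightPoly q M).eval x)
      (fun x => ∏' j : ℕ, (1 - 2 * (2 * x ^ 2 - 1) * q ^ (j + 1) + q ^ (2 * (j + 1)))) atTop
      (Icc (-1) 1) := by
  have hprod := Summable.hasProdUniformlyOn_nat_one_add isCompact_Icc
    (f := fun j x => -2 * (2 * x ^ 2 - 1) * q ^ (j + 1) + q ^ (2 * (j + 1)))
    ((summable_abs_pow_succ hq).mul_left 3)
    (Eventually.of_forall fun j x hx => abs_weight_factor_sub_one_le hq.le hx (j + 1))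
    (fun j => by fun_prop)
  have hlim := hprod.tendstoUniformlyOn_finsetRange
  simp only [← eval_weightPoly] at hlim
  exact hlim.congr_right fun x _ => tprod_congr fun j => by ring

lemma continuousOn_qWeight (hq : |q| < 1) : ContinuousOn (qWeight q) (Icc (-1) 1) :=
  ContinuousOn.mul (by fun_prop) ((tendstoUniformlyOn_eval_weightPoly hq).continuousOn
    (Frequently.of_forall fun M => (weightPoly q M).continuousOn))

/-- The moment functional of the weight `qWeight q`. -/
noncomputable def qHermiteFunctional (hq : |q| < 1) : ℝ[X] →ₗ[ℝ] ℝ :=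
  weightedIntegral (a := -1) (b := 1) (qWeight q)
    ((continuousOn_qWeight hq).intervalIntegrable_of_Icc (by norm_num))

lemma qHermiteFunctional_apply (hq : |q| < 1) (p : ℝ[X]) :
    qHermiteFunctional hq p = ∫ x in (-1 : ℝ)..1, p.eval x * qWeight q x :=
  rfl

lemma tendsto_semicircleFunctional_weightPoly_mul (hq : |q| < 1) (p : ℝ[X]) :
    Tendsto (fun M => semicircleFunctional (weightPoly q M * p)) atTop
      (𝓝 (qHermiteFunctional hq p)) := by
  have hunif := tendstoUniformlyOn_mul_left (g := fun x => p.eval x * (4 * √(1 - x ^ 2)))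
    isCompact_Icc (by fun_prop) (tendstoUniformlyOn_eval_weightPoly hq)
  rw [← uIcc_of_le (by norm_num : (-1 : ℝ) ≤ 1)] at hunif
  have hlim := hunif.tendsto_intervalIntegral_of_continuousOn (μ := volume)
    (Eventually.of_forall fun M => by fun_prop)
  simp only [semicircleFunctional_apply, qHermiteFunctional_apply, eval_mul, qWeight]
  convert hlim using 4 <;> ring

lemma qHermiteFunctional_U_of_odd (hq : |q| < 1) (j : ℤ) (hj : Odd j) :
    qHermiteFunctional hq (Chebyshev.U ℝ j) = 0 := by
  refine tendsto_nhds_unique (tendsto_semicircleFunctional_weightPoly_mul hq _) ?_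
  simp only [map_weightPoly_mul_U_of_odd
    (fun i hi => semicircleFunctional_U_eq_zero (by grind) (by grind)) _ hj, tendsto_const_nhds]

lemma qHermiteFunctional_U_two_mul (hq : |q| < 1) (k : ℕ) :
    qHermiteFunctional hq (Chebyshev.U ℝ (2 * k)) =
      2 * π / qPochInf q * thetaCoeff q k := by
  rw [← semicircleFunctional_one]
  exact tendsto_nhds_unique (tendsto_semicircleFunctional_weightPoly_mul hq _)
    (tendsto_map_weightPoly_mul_U_two_mul hq
      (fun i hi => semicircleFunctional_U_eq_zero (by lia) (by lia)) k)

end Integral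

theorem qHermite_orthogonality_general (q : ℝ) (hq : |q| < 1) (n m : ℕ) :
    (m ≠ n →
      ∫ x in (-1 : ℝ)..1,
        (qHermite q n).eval x * (qHermite q m).eval x * qWeight q x = 0) ∧
    ∫ x in (-1 : ℝ)..1,
      ((qHermite q n).eval x) ^ 2 * qWeight q x = 2 * π * qPochN q n / qPochInf q := by
  have hodd := qHermiteFunctional_U_of_odd hq
  have heven := qHermiteFunctional_U_two_mul hq
  constructor
  · intro hmn
    simpa only [qHermiteFunctional_apply, eval_mul]
      using map_qHermite_mul_qHermite_of_ne hodd heven hmn.symm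
  · simpa only [qHermiteFunctional_apply, eval_mul, eval_pow, ← sq, div_mul_eq_mul_div]
      using map_qHermite_mul_self hodd heven n

theorem qHermite_orthogonality (q : ℝ) (hq0 : 0 < q) (hq1 : q < 1) (n m : ℕ) :
    (m ≠ n →
      ∫ x in (-1 : ℝ)..1,
        (qHermite q n).eval x * (qHermite q m).eval x * qWeight q x = 0) ∧
    ∫ x in (-1 : ℝ)..1,
      ((qHermite q n).eval x) ^ 2 * qWeight q x = 2 * π * qPochN q n / qPochInf q :=
  qHermite_orthogonality_general q (abs_lt.2 ⟨by linarith, hq1⟩) n m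
end

section
/- (Rogers' bilinear / q-Mehler formula) For 0 < q < 1 and |t| < 1, Σ_{n=0}^{∞} t^n/(q;q)_n · H_n(cos θ|q) · H_n(cos φ|q) = (t²;q)_∞ / [(te^{i(θ+φ)};q)_∞ (te^{i(θ-φ)};q)_∞ (te^{-i(θ+φ)};q)_∞ (te^{-i(θ-φ)};q)_∞]. -/
/-- The infinite q-Pochhammer symbol `(a;q)_∞ = ∏_{k=0}^∞ (1 - a q^k)` for complex `a`. -/
noncomputable def qPochInfC (a : ℂ) (q : ℝ) : ℂ := ∏' k : ℕ, (1 - a * (q : ℂ) ^ k)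

/-!
With `h n a b` the homogeneous Rogers–Szegő polynomials, let
`S(a, b) = ∑ h n a b * h n c d / (q;q)_n`. The rule
`h (n + 1) a b - h (n + 1) (q * a) b = (1 - q ^ (n + 1)) * a * h n a b` and the three-term
recurrence give the first-order `q`-difference equation
`(1 - a * c) * (1 - a * d) * S(a, b) = (1 - a * b * c * d) * S(q * a, b)`.
Iterating it along `a * q ^ n → 0` reduces `S(a, b)` to `S(0, b) = S(b, 0)`, and a second
application reduces that to `S(0, 0) = 1`. Finally,
`H_n(cos θ|q) = h n (exp (I * θ)) (exp (-I * θ))`.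
-/

open Filter Finset Topology

section QPochhammer

/-- The finite `q`-shifted factorial `(a;q)_n = ∏_{k < n} (1 - a q^k)`; in particular
`(q;q)_n = qPochhammer q q n`. -/
def qPochhammer {R : Type*} [CommRing R] (a q : R) (n : ℕ) : R :=
  ∏ k ∈ range n, (1 - a * q ^ k)

/-- The infinite `q`-shifted factorial `(a;q)_∞`, over any topological ring. -/
noncomputable def qPochhammerInf {R : Type*} [CommRing R] [TopologicalSpace R] (a q : R) : R :=
  ∏' k : ℕ, (1 - a * q ^ k)

lemma qPochhammer_zero {R : Type*} [CommRing R] (a q : R) : qPochhammer a q 0 = 1 :=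
  prod_range_zero _

lemma qPochhammer_succ {R : Type*} [CommRing R] (a q : R) (n : ℕ) :
    qPochhammer a q (n + 1) = qPochhammer a q n * (1 - a * q ^ n) :=
  prod_range_succ _ n

lemma qPochhammer_self_succ {R : Type*} [CommRing R] (q : R) (n : ℕ) :
    qPochhammer q q (n + 1) = qPochhammer q q n * (1 - q ^ (n + 1)) := by
  rw [qPochhammer_succ, pow_succ']

lemma qPochhammer_self_ne_zero {R : Type*} [CommRing R] [IsDomain R] {q : R}
    (hq : ∀ n : ℕ, q ^ (n + 1) ≠ 1) (n : ℕ) : qPochhammer q q n ≠ 0 :=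
  prod_ne_zero_iff.2 fun k _ => sub_ne_zero.2 <| by simpa only [pow_succ'] using (hq k).symm

lemma qPochhammerInf_zero_left {R : Type*} [CommRing R] [TopologicalSpace R] (q : R) :
    qPochhammerInf 0 q = 1 := by
  simp only [qPochhammerInf, zero_mul, sub_zero, tprod_one]

variable {𝕜 : Type*} [NormedField 𝕜] {q : 𝕜}

lemma norm_mul_pow_le (hq : ‖q‖ ≤ 1) (a : 𝕜) (k : ℕ) : ‖a * q ^ k‖ ≤ ‖a‖ := by
  rw [norm_mul, norm_pow]
  exact mul_le_of_le_one_right (norm_nonneg a) (pow_le_one₀ (norm_nonneg q) hq)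

lemma one_sub_ne_zero_of_norm_lt_one {a : 𝕜} (ha : ‖a‖ < 1) : 1 - a ≠ 0 := by
  rw [sub_ne_zero]
  rintro rfl
  exact ha.ne norm_one

lemma pow_succ_ne_one_of_norm_lt_one (hq : ‖q‖ < 1) (n : ℕ) : q ^ (n + 1) ≠ 1 := by
  rw [pow_succ']
  have h := one_sub_ne_zero_of_norm_lt_one ((norm_mul_pow_le hq.le q n).trans_lt hq)
  exact (sub_ne_zero.1 h).symm

lemma summable_norm_neg_mul_pow (hq : ‖q‖ < 1) (a : 𝕜) :
    Summable fun k : ℕ => ‖-(a * q ^ k)‖ := by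
  simpa only [norm_neg, norm_mul, norm_pow] using
    (summable_geometric_of_lt_one (norm_nonneg q) hq).mul_left ‖a‖

variable [CompleteSpace 𝕜]

lemma tendsto_qPochhammer (hq : ‖q‖ < 1) (a : 𝕜) :
    Tendsto (qPochhammer a q) atTop (𝓝 (qPochhammerInf a q)) := by
  have h : HasProd (fun k => 1 - a * q ^ k) (qPochhammerInf a q) := by
    simpa only [qPochhammerInf, ← sub_eq_add_neg] using
      (multipliable_one_add_of_summable (summable_norm_neg_mul_pow hq a)).hasProd
  exact h.tendsto_prod_nat

lemma qPochhammerInf_ne_zero (hq : ‖q‖ < 1) {a : 𝕜} (ha : ‖a‖ < 1) : qPochhammerInf a q ≠ 0 := by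
  have h := tprod_one_add_ne_zero_of_summable (f := fun k : ℕ => -(a * q ^ k))
    (fun k => by
      rw [← sub_eq_add_neg]
      exact one_sub_ne_zero_of_norm_lt_one ((norm_mul_pow_le hq.le a k).trans_lt ha))
    (summable_norm_neg_mul_pow hq a)
  simpa only [qPochhammerInf, ← sub_eq_add_neg] using h

lemma exists_norm_qPochhammer_self_le (hq : ‖q‖ < 1) : ∃ C, ∀ n, ‖qPochhammer q q n‖ ≤ C := by
  obtain ⟨C, hC⟩ := (Metric.isBounded_range_of_tendsto _ (tendsto_qPochhammer hq q)).exists_norm_le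
  exact ⟨C, fun n => hC _ ⟨n, rfl⟩⟩

lemma exists_norm_inv_qPochhammer_self_le (hq : ‖q‖ < 1) :
    ∃ C, ∀ n, ‖(qPochhammer q q n)⁻¹‖ ≤ C := by
  have h := (tendsto_qPochhammer hq q).inv₀ (qPochhammerInf_ne_zero hq hq)
  obtain ⟨C, hC⟩ := (Metric.isBounded_range_of_tendsto _ h).exists_norm_le
  exact ⟨C, fun n => hC _ ⟨n, rfl⟩⟩

lemma qPochhammerInf_mul_eq_of_qDifference (hq : ‖q‖ < 1) {α β γ L : 𝕜} {x : ℕ → 𝕜}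
    (hx : ∀ n, (1 - α * q ^ n) * (1 - β * q ^ n) * x n = (1 - γ * q ^ n) * x (n + 1))
    (hL : Tendsto x atTop (𝓝 L)) :
    qPochhammerInf α q * qPochhammerInf β q * x 0 = qPochhammerInf γ q * L := by
  have iterate (n : ℕ) :
      qPochhammer α q n * qPochhammer β q n * x 0 = qPochhammer γ q n * x n := by
    induction n with
    | zero => simp only [qPochhammer_zero, one_mul]
    | succ n ih =>
      simp only [qPochhammer_succ]
      linear_combination (1 - α * q ^ n) * (1 - β * q ^ n) * ih + qPochhammer γ q n * hx n
  have hleft := ((tendsto_qPochhammer hq α).mul (tendsto_qPochhammer hq β)).mul_const (x 0)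
  have hright := (tendsto_qPochhammer hq γ).mul hL
  exact tendsto_nhds_unique hleft (hright.congr fun n => (iterate n).symm)

end QPochhammer

section RogersSzego

/-- The homogeneous Rogers–Szegő polynomial `∑_{k + l = n} (q;q)_n / ((q;q)_k (q;q)_l) a^k b^l`,
evaluated at `(a, b)`. The `q`-binomial coefficients are written as quotients, so `q` must not be a
root of unity. -/
def rogersSzego {K : Type*} [Field K] (q : K) (n : ℕ) (a b : K) : K :=
  qPochhammer q q n *
    ∑ p ∈ antidiagonal n, a ^ p.1 / qPochhammer q q p.1 * (b ^ p.2 / qPochhammer q q p.2)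

variable {K : Type*} [Field K] {q : K}

lemma rogersSzego_zero (q a b : K) : rogersSzego q 0 a b = 1 := by
  simp [rogersSzego, qPochhammer_zero]

lemma rogersSzego_comm (q : K) (n : ℕ) (a b : K) : rogersSzego q n a b = rogersSzego q n b a := by
  rw [rogersSzego, ← Nat.sum_antidiagonal_swap]
  simp only [rogersSzego, Prod.fst_swap, Prod.snd_swap, mul_comm]

lemma rogersSzego_mul_mul (q : K) (n : ℕ) (t a b : K) :
    rogersSzego q n (t * a) (t * b) = t ^ n * rogersSzego q n a b := by
  rw [rogersSzego, rogersSzego, mul_left_comm, mul_sum (antidiagonal n) _ (t ^ n)]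
  congr 1
  refine sum_congr rfl fun p hp => ?_
  rw [← mem_antidiagonal.1 hp]
  ring

lemma rogersSzego_succ_sub_rogersSzego_mul_left (hq : ∀ n : ℕ, q ^ (n + 1) ≠ 1) (n : ℕ) (a b : K) :
    rogersSzego q (n + 1) a b - rogersSzego q (n + 1) (q * a) b =
      (1 - q ^ (n + 1)) * a * rogersSzego q n a b := by
  have coeff (k : ℕ) : a ^ (k + 1) / qPochhammer q q (k + 1) -
      (q * a) ^ (k + 1) / qPochhammer q q (k + 1) = a * (a ^ k / qPochhammer q q k) := by
    have hk := sub_ne_zero.2 (hq k).symm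
    have := qPochhammer_self_ne_zero hq k
    rw [qPochhammer_self_succ]
    field_simp
    ring
  simp only [rogersSzego, Nat.sum_antidiagonal_succ, pow_zero]
  rw [← mul_sub, add_sub_add_left_eq_sub, ← sum_sub_distrib]
  simp only [← sub_mul, coeff, mul_assoc, ← mul_sum]
  rw [qPochhammer_self_succ]
  ring

lemma rogersSzego_succ (hq : ∀ n : ℕ, q ^ (n + 1) ≠ 1) (n : ℕ) (a b : K) :
    rogersSzego q (n + 1) a b = a * rogersSzego q n a b + b * rogersSzego q n (q * a) b := by
  have hleft := rogersSzego_succ_sub_rogersSzego_mul_left hq n a b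
  have hright := rogersSzego_succ_sub_rogersSzego_mul_left hq n b (q * a)
  rw [rogersSzego_comm q _ b, rogersSzego_comm q _ (q * b), rogersSzego_comm q _ b,
    rogersSzego_mul_mul] at hright
  refine mul_left_cancel₀ (sub_ne_zero.2 (hq n).symm) ?_
  linear_combination hleft + hright

lemma rogersSzego_add_two (hq : ∀ n : ℕ, q ^ (n + 1) ≠ 1) (n : ℕ) (a b : K) :
    rogersSzego q (n + 2) a b =
      (a + b) * rogersSzego q (n + 1) a b - (1 - q ^ (n + 1)) * (a * b) * rogersSzego q n a b := by
  linear_combination rogersSzego_succ hq (n + 1) a b -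
    b * rogersSzego_succ_sub_rogersSzego_mul_left hq n a b

lemma rogersSzego_one (hq : ∀ n : ℕ, q ^ (n + 1) ≠ 1) (a b : K) :
    rogersSzego q 1 a b = a + b := by
  simp only [rogersSzego_succ hq 0, rogersSzego_zero, mul_one]

lemma exists_norm_rogersSzego_le {𝕜 : Type*} [NormedField 𝕜] [CompleteSpace 𝕜] {q : 𝕜}
    (hq : ‖q‖ < 1) :
    ∃ C, ∀ (n : ℕ) (a b : 𝕜), ‖rogersSzego q n a b‖ ≤ C * (n + 1) * max ‖a‖ ‖b‖ ^ n := by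
  obtain ⟨A, hA⟩ := exists_norm_qPochhammer_self_le hq
  obtain ⟨B, hB⟩ := exists_norm_inv_qPochhammer_self_le hq
  have hA0 : 0 ≤ A := (norm_nonneg _).trans (hA 0)
  have hB0 : 0 ≤ B := (norm_nonneg _).trans (hB 0)
  refine ⟨A * B ^ 2, fun n a b => ?_⟩
  set M := max ‖a‖ ‖b‖
  have factor {z : 𝕜} (hz : ‖z‖ ≤ M) (k : ℕ) : ‖z ^ k / qPochhammer q q k‖ ≤ M ^ k * B := by
    rw [div_eq_mul_inv, norm_mul, norm_pow]
    gcongr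
    exact hB k
  calc ‖rogersSzego q n a b‖
      ≤ A * ∑ p ∈ antidiagonal n, M ^ p.1 * B * (M ^ p.2 * B) := by
        rw [rogersSzego, norm_mul]
        refine mul_le_mul (hA n) (norm_sum_le_of_le _ fun p _ => ?_) (norm_nonneg _) hA0
        rw [norm_mul]
        exact mul_le_mul (factor (le_max_left _ _) _) (factor (le_max_right _ _) _)
          (norm_nonneg _) (by positivity)
    _ = A * ∑ p ∈ antidiagonal n, B ^ 2 * M ^ n := by
        congr 1
        refine sum_congr rfl fun p hp => ?_
        rw [← mem_antidiagonal.1 hp]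
        ring
    _ = A * B ^ 2 * (n + 1) * M ^ n := by
        rw [sum_const, Nat.card_antidiagonal, nsmul_eq_mul]
        push_cast
        ring

end RogersSzego

section MehlerKernel

/-- The `n`-th term of the bilinear generating function of the Rogers–Szegő polynomials. The usual
variable `t` is absorbed into `(a, b)` by homogeneity. -/
def mehlerTerm {K : Type*} [Field K] (q a b c d : K) (n : ℕ) : K :=
  rogersSzego q n a b * rogersSzego q n c d / qPochhammer q q n

lemma mehlerTerm_comm_left {K : Type*} [Field K] (q a b c d : K) :
    mehlerTerm q a b c d = mehlerTerm q b a c d := by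
  funext n
  rw [mehlerTerm, mehlerTerm, rogersSzego_comm q n a b]

lemma mehlerTerm_zero {K : Type*} [Field K] (q a b c d : K) : mehlerTerm q a b c d 0 = 1 := by
  simp only [mehlerTerm, rogersSzego_zero, qPochhammer_zero, mul_one, div_one]

lemma mehlerTerm_zero_zero_succ {K : Type*} [Field K] (q c d : K) (n : ℕ) :
    mehlerTerm q 0 0 c d (n + 1) = 0 := by
  have h : rogersSzego q (n + 1) 0 0 = 0 := by
    simpa using rogersSzego_mul_mul q (n + 1) 0 0 0
  rw [mehlerTerm, h, zero_mul, zero_div]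

lemma mehlerTerm_succ_sub_mehlerTerm_mul_left {K : Type*} [Field K] {q : K}
    (hq : ∀ n : ℕ, q ^ (n + 1) ≠ 1) (a b c d : K) (n : ℕ) :
    mehlerTerm q a b c d (n + 1) - mehlerTerm q (q * a) b c d (n + 1) =
      a * rogersSzego q n a b * rogersSzego q (n + 1) c d / qPochhammer q q n := by
  have hn := sub_ne_zero.2 (hq n).symm
  rw [mehlerTerm, mehlerTerm, ← sub_div, ← sub_mul, rogersSzego_succ_sub_rogersSzego_mul_left hq,
    qPochhammer_self_succ]
  field_simp

lemma mehlerTerm_one_sub_mehlerTerm_mul_left {K : Type*} [Field K] {q : K}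
    (hq : ∀ n : ℕ, q ^ (n + 1) ≠ 1) (a b c d : K) :
    mehlerTerm q a b c d 1 - mehlerTerm q (q * a) b c d 1 = a * (c + d) := by
  simpa only [rogersSzego_zero, zero_add, rogersSzego_one hq, qPochhammer_zero, mul_one, div_one]
    using mehlerTerm_succ_sub_mehlerTerm_mul_left hq a b c d 0

lemma mehlerTerm_add_two_sub_mehlerTerm_mul_left {K : Type*} [Field K] {q : K}
    (hq : ∀ n : ℕ, q ^ (n + 1) ≠ 1) (a b c d : K) (n : ℕ) :
    mehlerTerm q a b c d (n + 2) - mehlerTerm q (q * a) b c d (n + 2) =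
      a * (c + d) * mehlerTerm q a b c d (n + 1) -
        a * c * d * (a * mehlerTerm q a b c d n + b * mehlerTerm q (q * a) b c d n) := by
  have h0 := qPochhammer_self_ne_zero hq n
  have h1 := sub_ne_zero.2 (hq n).symm
  rw [mehlerTerm_succ_sub_mehlerTerm_mul_left hq, rogersSzego_add_two hq]
  simp only [mehlerTerm, rogersSzego_succ hq n a b, qPochhammer_self_succ]
  field_simp

section TopologicalField

variable {K : Type*} [Field K] [TopologicalSpace K]

lemma tsum_mehlerTerm_zero_zero [T2Space K] (q c d : K) : ∑' n, mehlerTerm q 0 0 c d n = 1 := by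
  rw [tsum_eq_single 0 fun n hn => ?_, mehlerTerm_zero]
  obtain ⟨m, rfl⟩ := Nat.exists_eq_succ_of_ne_zero hn
  exact mehlerTerm_zero_zero_succ q c d m

variable [IsTopologicalRing K]

lemma one_sub_mul_tsum_mehlerTerm [T2Space K] {q a b c d : K} (hq : ∀ n : ℕ, q ^ (n + 1) ≠ 1)
    (hf : Summable (mehlerTerm q a b c d)) (hg : Summable (mehlerTerm q (q * a) b c d)) :
    (1 - a * c) * (1 - a * d) * ∑' n, mehlerTerm q a b c d n =
      (1 - a * b * c * d) * ∑' n, mehlerTerm q (q * a) b c d n := by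
  have hleft := (hasSum_nat_add_iff' 2).2 (hf.hasSum.sub hg.hasSum)
  have hright := (((hasSum_nat_add_iff' 1).2 hf.hasSum).mul_left (a * (c + d))).sub
    (((hf.hasSum.mul_left a).add (hg.hasSum.mul_left b)).mul_left (a * c * d))
  have hsum := hleft.unique
    (hright.congr_fun (mehlerTerm_add_two_sub_mehlerTerm_mul_left hq a b c d))
  simp only [sum_range_succ, sum_range_zero, mehlerTerm_zero,
    mehlerTerm_one_sub_mehlerTerm_mul_left hq] at hsum
  linear_combination hsum

lemma continuous_mehlerTerm_left (q b c d : K) (n : ℕ) :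
    Continuous fun a => mehlerTerm q a b c d n := by
  unfold mehlerTerm rogersSzego
  fun_prop

end TopologicalField

variable {𝕜 : Type*} [NormedField 𝕜] [CompleteSpace 𝕜] {q a b c d : 𝕜}

lemma exists_norm_mehlerTerm_le (hq : ‖q‖ < 1) :
    ∃ C, ∀ (a b c d : 𝕜) (n : ℕ), ‖mehlerTerm q a b c d n‖ ≤
      C * ((n + 1) ^ 2 * (max ‖a‖ ‖b‖ * max ‖c‖ ‖d‖) ^ n) := by
  obtain ⟨A, hA⟩ := exists_norm_rogersSzego_le hq
  obtain ⟨B, hB⟩ := exists_norm_inv_qPochhammer_self_le hq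
  refine ⟨A ^ 2 * B, fun a b c d n => ?_⟩
  calc ‖mehlerTerm q a b c d n‖
      = ‖rogersSzego q n a b‖ * ‖rogersSzego q n c d‖ * ‖(qPochhammer q q n)⁻¹‖ := by
        rw [mehlerTerm, div_eq_mul_inv, norm_mul, norm_mul]
    _ ≤ A * (n + 1) * max ‖a‖ ‖b‖ ^ n * (A * (n + 1) * max ‖c‖ ‖d‖ ^ n) * B := by
        have hab := hA n a b
        have hab0 := (norm_nonneg _).trans hab
        have hcd := hA n c d
        have hcd0 := (norm_nonneg _).trans hcd
        exact mul_le_mul (mul_le_mul hab hcd (norm_nonneg _) hab0) (hB n) (norm_nonneg _)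
          (mul_nonneg hab0 hcd0)
    _ = A ^ 2 * B * ((n + 1) ^ 2 * (max ‖a‖ ‖b‖ * max ‖c‖ ‖d‖) ^ n) := by ring

lemma summable_add_one_sq_mul_geometric {r : ℝ} (hr0 : 0 ≤ r) (hr1 : r < 1) :
    Summable fun n : ℕ => ((n : ℝ) + 1) ^ 2 * r ^ n := by
  have hr : ‖r‖ < 1 := by rwa [Real.norm_of_nonneg hr0]
  have h := ((summable_pow_mul_geometric_of_norm_lt_one 2 hr).add
    ((summable_pow_mul_geometric_of_norm_lt_one 1 hr).mul_left 2)).add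
    (summable_pow_mul_geometric_of_norm_lt_one 0 hr)
  exact h.congr fun n => by ring

lemma exists_summable_forall_norm_mehlerTerm_le (hq : ‖q‖ < 1)
    (h : max ‖a‖ ‖b‖ * max ‖c‖ ‖d‖ < 1) :
    ∃ u : ℕ → ℝ, Summable u ∧
      ∀ a' : 𝕜, ‖a'‖ ≤ ‖a‖ → ∀ n, ‖mehlerTerm q a' b c d n‖ ≤ u n := by
  obtain ⟨C, hC⟩ := exists_norm_mehlerTerm_le hq
  have hC0 : 0 ≤ C := by
    simpa [mehlerTerm_zero] using (norm_nonneg _).trans (hC 0 0 0 0 0)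
  refine ⟨_, (summable_add_one_sq_mul_geometric (by positivity) h).mul_left C,
    fun a' ha' n => (hC a' b c d n).trans ?_⟩
  gcongr

lemma summable_mehlerTerm (hq : ‖q‖ < 1) (h : max ‖a‖ ‖b‖ * max ‖c‖ ‖d‖ < 1) :
    Summable (mehlerTerm q a b c d) := by
  obtain ⟨u, hu, hle⟩ := exists_summable_forall_norm_mehlerTerm_le hq h
  exact hu.of_norm_bounded (hle a le_rfl)

lemma tendsto_tsum_mehlerTerm_pow_mul (hq : ‖q‖ < 1) (h : max ‖a‖ ‖b‖ * max ‖c‖ ‖d‖ < 1) :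
    Tendsto (fun N : ℕ => ∑' n, mehlerTerm q (a * q ^ N) b c d n) atTop
      (𝓝 (∑' n, mehlerTerm q 0 b c d n)) := by
  obtain ⟨u, hu, hle⟩ := exists_summable_forall_norm_mehlerTerm_le hq h
  have hlim : Tendsto (fun N : ℕ => a * q ^ N) atTop (𝓝 0) := by
    simpa only [mul_zero] using (tendsto_pow_atTop_nhds_zero_of_norm_lt_one hq).const_mul a
  exact tendsto_tsum_of_dominated_convergence hu
    (fun n => ((continuous_mehlerTerm_left q b c d n).tendsto 0).comp hlim)
    (.of_forall fun N => hle _ (norm_mul_pow_le hq.le a N))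

lemma qPochhammerInf_mul_tsum_mehlerTerm (hq : ‖q‖ < 1) (h : max ‖a‖ ‖b‖ * max ‖c‖ ‖d‖ < 1) :
    qPochhammerInf (a * c) q * qPochhammerInf (a * d) q * ∑' n, mehlerTerm q a b c d n =
      qPochhammerInf (a * b * c * d) q * ∑' n, mehlerTerm q 0 b c d n := by
  obtain ⟨u, hu, hle⟩ := exists_summable_forall_norm_mehlerTerm_le hq h
  have hsum (N : ℕ) : Summable (mehlerTerm q (a * q ^ N) b c d) :=
    hu.of_norm_bounded (hle _ (norm_mul_pow_le hq.le a N))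
  have step (N : ℕ) : (1 - a * c * q ^ N) * (1 - a * d * q ^ N) *
      ∑' n, mehlerTerm q (a * q ^ N) b c d n =
        (1 - a * b * c * d * q ^ N) * ∑' n, mehlerTerm q (a * q ^ (N + 1)) b c d n := by
    have hsucc : a * q ^ (N + 1) = q * (a * q ^ N) := by ring
    have hN := hsum (N + 1)
    rw [hsucc] at hN ⊢
    linear_combination
      one_sub_mul_tsum_mehlerTerm (pow_succ_ne_one_of_norm_lt_one hq) (hsum N) hN
  simpa only [pow_zero, mul_one] using
    qPochhammerInf_mul_eq_of_qDifference hq step (tendsto_tsum_mehlerTerm_pow_mul hq h)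

theorem hasSum_mehlerTerm (hq : ‖q‖ < 1) (h : max ‖a‖ ‖b‖ * max ‖c‖ ‖d‖ < 1) :
    HasSum (mehlerTerm q a b c d)
      (qPochhammerInf (a * b * c * d) q /
        (qPochhammerInf (a * c) q * qPochhammerInf (a * d) q *
          qPochhammerInf (b * d) q * qPochhammerInf (b * c) q)) := by
  have hne {x y : 𝕜} (hx : ‖x‖ ≤ max ‖a‖ ‖b‖) (hy : ‖y‖ ≤ max ‖c‖ ‖d‖) :
      qPochhammerInf (x * y) q ≠ 0 := by
    refine qPochhammerInf_ne_zero hq (lt_of_le_of_lt ?_ h)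
    rw [norm_mul]
    gcongr
  have hac := hne (le_max_left _ _) (le_max_left _ _)
  have had := hne (le_max_left _ _) (le_max_right _ _)
  have hbc := hne (le_max_right _ _) (le_max_left _ _)
  have hbd := hne (le_max_right _ _) (le_max_right _ _)
  have hb0 : max ‖b‖ ‖(0 : 𝕜)‖ * max ‖c‖ ‖d‖ < 1 := by
    refine lt_of_le_of_lt ?_ h
    rw [norm_zero, max_eq_left (norm_nonneg b)]
    gcongr
    exact le_max_right _ _
  have hab := qPochhammerInf_mul_tsum_mehlerTerm hq h
  have hb := qPochhammerInf_mul_tsum_mehlerTerm hq hb0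
  rw [tsum_mehlerTerm_zero_zero, mul_zero, zero_mul, zero_mul, qPochhammerInf_zero_left,
    mul_one] at hb
  rw [mehlerTerm_comm_left q 0 b] at hab
  convert (summable_mehlerTerm hq h).hasSum using 1
  rw [div_eq_iff (mul_ne_zero (mul_ne_zero (mul_ne_zero hac had) hbd) hbc)]
  linear_combination -qPochhammerInf (b * d) q * qPochhammerInf (b * c) q * hab -
    qPochhammerInf (a * b * c * d) q * hb

end MehlerKernel

section QHermite

lemma aeval_qHermite_add_two {A : Type*} [CommRing A] [Algebra ℝ A] (q : ℝ) (n : ℕ) (x : A) :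
    Polynomial.aeval x (qHermite q (n + 2)) =
      2 * x * Polynomial.aeval x (qHermite q (n + 1)) -
        (1 - algebraMap ℝ A q ^ (n + 1)) * Polynomial.aeval x (qHermite q n) := by
  simp [qHermite, map_ofNat]

lemma aeval_qHermite_eq_rogersSzego {q : ℝ} (hq : ∀ n : ℕ, (q : ℂ) ^ (n + 1) ≠ 1) {a b : ℂ}
    (hab : a * b = 1) (n : ℕ) :
    Polynomial.aeval ((a + b) / 2) (qHermite q n) = rogersSzego (q : ℂ) n a b := by
  induction n using Nat.twoStepInduction with
  | zero => simp [qHermite, rogersSzego_zero]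
  | one => simp [qHermite, rogersSzego_one hq, mul_div_cancel₀]
  | more n ih₀ ih₁ =>
    rw [aeval_qHermite_add_two, ih₀, ih₁, rogersSzego_add_two hq, hab, Complex.coe_algebraMap]
    ring

lemma exp_I_mul_mul_exp_neg_I_mul (θ : ℂ) :
    Complex.exp (Complex.I * θ) * Complex.exp (-Complex.I * θ) = 1 := by
  rw [← Complex.exp_add, neg_mul, add_neg_cancel, Complex.exp_zero]

lemma aeval_cos_qHermite {q : ℝ} (hq : ∀ n : ℕ, (q : ℂ) ^ (n + 1) ≠ 1) (θ : ℂ) (n : ℕ) :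
    Polynomial.aeval (Complex.cos θ) (qHermite q n) =
      rogersSzego (q : ℂ) n (Complex.exp (Complex.I * θ)) (Complex.exp (-Complex.I * θ)) := by
  rw [← aeval_qHermite_eq_rogersSzego hq (exp_I_mul_mul_exp_neg_I_mul θ), Complex.cos,
    mul_comm θ, mul_comm (-θ), neg_mul, mul_neg]

lemma ofReal_qPochN (q : ℝ) (n : ℕ) : (qPochN q n : ℂ) = qPochhammer (q : ℂ) q n := by
  simp [qPochN, qPochhammer, pow_succ']

lemma qPochInfC_eq_qPochhammerInf (a : ℂ) (q : ℝ) : qPochInfC a q = qPochhammerInf a (q : ℂ) :=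
  rfl

lemma max_norm_exp_I_mul (θ : ℂ) :
    max ‖Complex.exp (Complex.I * θ)‖ ‖Complex.exp (-Complex.I * θ)‖ = Real.exp |θ.im| := by
  simp [Complex.norm_exp, abs_eq_max_neg, Real.exp_monotone.map_max, max_comm]

lemma aeval_ofReal_cos (p : Polynomial ℝ) (θ : ℝ) :
    Polynomial.aeval (Complex.cos θ) p = ((p.eval (Real.cos θ) : ℝ) : ℂ) := by
  rw [← Complex.ofReal_cos, ← Complex.coe_algebraMap,
    Polynomial.aeval_algebraMap_apply_eq_algebraMap_eval]

/-- The hypothesis says that all four numbers `t * exp (±I * (θ ± φ))` lie in the unit disc. -/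
theorem q_mehler_formula_general {q : ℝ} (hq : |q| < 1) {θ φ t : ℂ}
    (ht : ‖t‖ * Real.exp (|θ.im| + |φ.im|) < 1) :
    HasSum (fun n : ℕ => t ^ n / (qPochN q n : ℂ) *
        Polynomial.aeval (Complex.cos θ) (qHermite q n) *
        Polynomial.aeval (Complex.cos φ) (qHermite q n))
      (qPochInfC (t ^ 2) q /
        (qPochInfC (t * Complex.exp (Complex.I * (θ + φ))) q *
          qPochInfC (t * Complex.exp (Complex.I * (θ - φ))) q *
          qPochInfC (t * Complex.exp (-Complex.I * (θ + φ))) q *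
          qPochInfC (t * Complex.exp (-Complex.I * (θ - φ))) q)) := by
  have hq' : ‖(q : ℂ)‖ < 1 := by rwa [Complex.norm_real]
  have hne := pow_succ_ne_one_of_norm_lt_one hq'
  have hmax : max ‖t * Complex.exp (Complex.I * θ)‖ ‖t * Complex.exp (-Complex.I * θ)‖ *
      max ‖Complex.exp (Complex.I * φ)‖ ‖Complex.exp (-Complex.I * φ)‖ < 1 := by
    rwa [norm_mul, norm_mul, ← mul_max_of_nonneg _ _ (norm_nonneg t), max_norm_exp_I_mul,
      max_norm_exp_I_mul, mul_assoc, ← Real.exp_add]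
  have hpow : t * Complex.exp (Complex.I * θ) * (t * Complex.exp (-Complex.I * θ)) *
      Complex.exp (Complex.I * φ) * Complex.exp (-Complex.I * φ) = t ^ 2 := by
    linear_combination t ^ 2 * exp_I_mul_mul_exp_neg_I_mul φ +
      t ^ 2 * Complex.exp (Complex.I * φ) * Complex.exp (-Complex.I * φ) *
        exp_I_mul_mul_exp_neg_I_mul θ
  have hsum := hasSum_mehlerTerm hq' hmax
  rw [hpow] at hsum
  rw [show Complex.I * (θ + φ) = Complex.I * θ + Complex.I * φ by ring,
    show Complex.I * (θ - φ) = Complex.I * θ + -Complex.I * φ by ring,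
    show -Complex.I * (θ + φ) = -Complex.I * θ + -Complex.I * φ by ring,
    show -Complex.I * (θ - φ) = -Complex.I * θ + Complex.I * φ by ring]
  simp only [Complex.exp_add, ← mul_assoc t, qPochInfC_eq_qPochhammerInf,
    aeval_cos_qHermite hne, ofReal_qPochN]
  refine hsum.congr_fun fun n => ?_
  rw [mehlerTerm, rogersSzego_mul_mul]
  ring

end QHermite

/-- Rogers' bilinear (q-Mehler) formula for the continuous q-Hermite polynomials. -/
theorem q_mehler_formula (q : ℝ) (hq0 : 0 < q) (hq1 : q < 1)
    (θ φ : ℝ) (t : ℂ) (ht : ‖t‖ < 1) :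
    ∑' n : ℕ, t ^ n / (qPochN q n : ℂ) *
        (((qHermite q n).eval (Real.cos θ) : ℝ) : ℂ) *
        (((qHermite q n).eval (Real.cos φ) : ℝ) : ℂ) =
      qPochInfC (t ^ 2) q /
        (qPochInfC (t * Complex.exp (Complex.I * (θ + φ))) q *
          qPochInfC (t * Complex.exp (Complex.I * (θ - φ))) q *
          qPochInfC (t * Complex.exp (-Complex.I * (θ + φ))) q *
          qPochInfC (t * Complex.exp (-Complex.I * (θ - φ))) q) := by
  simpa only [aeval_ofReal_cos] using (q_mehler_formula_general (θ := θ) (φ := φ)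
    (abs_lt.2 ⟨by linarith, hq1⟩) (by simpa using ht)).tsum_eq
end

section
/- (Eigenvalue equation for the momentum operator on the t-kernel) With P acting on the basis by P ψ_n = (√(1-q)/(2i))(e_n^{1/2} ψ_{n-1} - e_{n+1}^{1/2} ψ_{n+1}), the kernel K_t(x,y;q) = α^{-2}Σ_{n} t^n ψ_n(x)ψ_n(y) satisfies P_x K_t(x,y;q) = [2ty - (1+t²)x]/(i(1-t²)) · K_t(x,y;q); in particular for t = i, P_x K_i(x,y;q) = y·K_i(x,y;q). -/
/-!
Put `a n = √(e_n)` and let `S`, `A`, `B` be the sums of `t ^ n` times `ψ_n(x) ψ_n(y)`,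
`a (n + 1) ψ_{n+1}(x) ψ_n(y)` and `a (n + 1) ψ_{n+1}(y) ψ_n(x)` respectively. Reindexing turns the
sum of `t ^ n a n ψ_{n-1}(x) ψ_n(y)` into `t B`, so summing the three-term recurrence in `x` and
in `y` gives `A + t B = 2x / √(1-q) · S` and `B + t A = 2y / √(1-q) · S`. The momentum operator
produces `t B - A`, which these two equations express through `S`.

Convergence holds because the wave functions are bounded in `n`. For `|x| < 1` put `z = e^{iθ}`
with `x = cos θ`; the q-Hermite recurrence is a summable perturbation of that of the Chebyshev
polynomials, `u_n = H_{n+1} - z⁻¹ H_n` satisfies `u_{n+1} = z u_n + q ^ (n+1) H_n`, and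
`Im u_n = sin θ H_n`, so Grönwall's inequality applies to `‖u_n‖`.
-/

open scoped Real

/-- The infinite q-Pochhammer symbol `(a;q)_∞ = ∏_{k=0}^∞ (1 - a q^k)`. -/
noncomputable def qPochInfA (a q : ℝ) : ℝ := ∏' k : ℕ, (1 - a * q ^ k)

/-- The q-wave functions `ψ_n(x) = α d_n⁻¹ ρ(x)^{1/2} H_n(x|q)`, where
`α = ((1-q)/2)^{1/4}` and `d_n⁻¹ = ((q^{n+1};q)_∞ / (2π))^{1/2}`. -/
noncomputable def qWave (q : ℝ) (n : ℕ) (x : ℝ) : ℝ :=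
  ((1 - q) / 2) ^ ((1 : ℝ) / 4) * Real.sqrt (qPochInfA (q ^ (n + 1)) q / (2 * π)) *
    Real.sqrt (qWeight q x) * (qHermite q n).eval x

/-- The q-Poisson kernel `K_t(x,y;q) = α⁻² Σ_{n=0}^∞ tⁿ ψ_n(x) ψ_n(y)`,
with `α⁻² = ((1-q)/2)^{-1/2}`. -/
noncomputable def qKernel (q : ℝ) (t : ℂ) (x y : ℝ) : ℂ :=
  (Real.sqrt (2 / (1 - q)) : ℂ) *
    ∑' n : ℕ, t ^ n * (qWave q n x : ℂ) * (qWave q n y : ℂ)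

/-- `e_n = (1 - qⁿ)/(1 - q)`. -/
noncomputable def qE (q : ℝ) (n : ℕ) : ℝ := (1 - q ^ n) / (1 - q)

open Filter Asymptotics

section JacobiRecurrence

variable {𝕜 : Type*} [Field 𝕜] [TopologicalSpace 𝕜] [IsTopologicalRing 𝕜] {a u v : ℕ → 𝕜}
  {t A B ξ η : 𝕜}

lemma hasSum_pow_mul_pred (ha : a 0 = 0)
    (hB : HasSum (fun n ↦ t ^ n * (a (n + 1) * v (n + 1)) * u n) B) :
    HasSum (fun n ↦ t ^ n * (a n * u (n - 1)) * v n) (t * B) := by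
  rw [← hasSum_nat_add_iff' 1]
  simp only [Finset.sum_range_one, ha, zero_mul, mul_zero, sub_zero]
  refine (hB.mul_left t).congr_fun fun n ↦ ?_
  rw [Nat.add_sub_cancel]
  ring

variable [T2Space 𝕜]

lemma add_mul_eq_mul_tsum_of_recurrence (ha : a 0 = 0)
    (hu : ∀ n, a (n + 1) * u (n + 1) + a n * u (n - 1) = ξ * u n)
    (hA : HasSum (fun n ↦ t ^ n * (a (n + 1) * u (n + 1)) * v n) A)
    (hB : HasSum (fun n ↦ t ^ n * (a (n + 1) * v (n + 1)) * u n) B) :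
    A + t * B = ξ * ∑' n, t ^ n * u n * v n := by
  rw [← tsum_mul_left, ← (hA.add (hasSum_pow_mul_pred ha hB)).tsum_eq]
  refine tsum_congr fun n ↦ ?_
  linear_combination t ^ n * v n * hu n

theorem one_sub_sq_mul_tsum_of_recurrence (ha : a 0 = 0)
    (hu : ∀ n, a (n + 1) * u (n + 1) + a n * u (n - 1) = ξ * u n)
    (hv : ∀ n, a (n + 1) * v (n + 1) + a n * v (n - 1) = η * v n)
    (huv : Summable fun n ↦ t ^ n * (a (n + 1) * u (n + 1)) * v n)
    (hvu : Summable fun n ↦ t ^ n * (a (n + 1) * v (n + 1)) * u n) :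
    (1 - t ^ 2) * ∑' n, t ^ n * (a n * u (n - 1) - a (n + 1) * u (n + 1)) * v n =
      (2 * t * η - (1 + t ^ 2) * ξ) * ∑' n, t ^ n * u n * v n := by
  obtain ⟨A, hA⟩ := huv
  obtain ⟨B, hB⟩ := hvu
  have hx : A + t * B = ξ * ∑' n, t ^ n * u n * v n :=
    add_mul_eq_mul_tsum_of_recurrence ha hu hA hB
  have hy : B + t * A = η * ∑' n, t ^ n * u n * v n := by
    simpa only [mul_right_comm _ (v _)] using add_mul_eq_mul_tsum_of_recurrence ha hv hB hA
  have hP : ∑' n, t ^ n * (a n * u (n - 1) - a (n + 1) * u (n + 1)) * v n = t * B - A := by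
    simpa only [sub_mul, mul_sub] using ((hasSum_pow_mul_pred ha hB).sub hA).tsum_eq
  rw [hP]
  linear_combination 2 * t * hy - (1 + t ^ 2) * hx

end JacobiRecurrence

section Boundedness

lemma summable_pow_mul_of_isBigO_one {𝕜 : Type*} [NormedField 𝕜] [CompleteSpace 𝕜] {t : 𝕜}
    (ht : ‖t‖ < 1) {f : ℕ → 𝕜} (hf : f =O[atTop] fun _ ↦ (1 : ℝ)) :
    Summable fun n ↦ t ^ n * f n := by
  refine summable_of_isBigO_nat (summable_geometric_of_lt_one (norm_nonneg t) ht) ?_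
  simpa only [norm_pow, mul_one] using (isBigO_refl (t ^ ·) atTop).norm_right.mul hf

lemma isBigO_one_of_succ_le_one_add_mul {u c : ℕ → ℝ} (hu0 : ∀ n, 0 ≤ u n) (hc0 : ∀ n, 0 ≤ c n)
    (hc : Summable c) (hu : ∀ n, u (n + 1) ≤ (1 + c n) * u n) :
    u =O[atTop] fun _ ↦ (1 : ℝ) := by
  refine isBigO_one_nat_atTop_iff.2 ⟨u 0 * Real.exp (∑' n, c n), fun n ↦ ?_⟩
  rw [Real.norm_of_nonneg (hu0 n)]
  calc u n ≤ u 0 * Real.exp (∑ k ∈ Finset.Ico 0 n, c k) := by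
        simpa using discrete_gronwall (b := 0) (hu0 0) (by simpa using hu) (fun k _ ↦ hc0 k)
          (fun _ _ ↦ le_rfl) n.zero_le
    _ ≤ u 0 * Real.exp (∑' k, c k) := by
        gcongr
        exacts [hu0 0, hc.sum_le_tsum _ fun k _ ↦ hc0 k]

lemma isBigO_one_of_perturbed_rotation {u : ℕ → ℂ} {h c : ℕ → ℝ} {z : ℂ} {s : ℝ} (hz : ‖z‖ = 1)
    (hs : 0 < s) (hc : Summable c) (hu : ∀ n, u (n + 1) = z * u n + c n * h n)
    (him : ∀ n, (u n).im = s * h n) : h =O[atTop] fun _ ↦ (1 : ℝ) := by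
  have hle (n : ℕ) : ‖h n‖ ≤ s⁻¹ * ‖u n‖ := by
    rw [inv_mul_eq_div, le_div_iff₀' hs, Real.norm_eq_abs, ← abs_of_pos hs, ← abs_mul, ← him]
    exact Complex.abs_im_le_norm (u n)
  have hgrowth (n : ℕ) : ‖u (n + 1)‖ ≤ (1 + ‖c n‖ * s⁻¹) * ‖u n‖ :=
    calc ‖u (n + 1)‖ ≤ ‖u n‖ + ‖c n‖ * ‖h n‖ := by
          simpa only [hu, norm_mul, hz, one_mul, Complex.norm_real] using
            norm_add_le (z * u n) (c n * h n)
      _ ≤ ‖u n‖ + ‖c n‖ * (s⁻¹ * ‖u n‖) := by gcongr; exact hle n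
      _ = (1 + ‖c n‖ * s⁻¹) * ‖u n‖ := by ring
  have hnorm : (fun n ↦ ‖u n‖) =O[atTop] fun _ ↦ (1 : ℝ) :=
    isBigO_one_of_succ_le_one_add_mul (fun n ↦ norm_nonneg (u n)) (fun n ↦ by positivity)
      (hc.norm.mul_right s⁻¹) hgrowth
  refine IsBigO.trans (IsBigO.of_bound s⁻¹ (Eventually.of_forall fun n ↦ ?_)) hnorm
  simpa only [norm_norm] using hle n

theorem isBigO_one_of_perturbed_chebyshev_recurrence {h c : ℕ → ℝ} {x : ℝ} (hx : |x| < 1)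
    (hc : Summable c) (hh : ∀ n, h (n + 2) = 2 * x * h (n + 1) - (1 - c n) * h n) :
    h =O[atTop] fun _ ↦ (1 : ℝ) := by
  obtain ⟨hx₁, hx₂⟩ := abs_lt.1 hx
  set θ := Real.arccos x
  have hcos : Real.cos θ = x := Real.cos_arccos hx₁.le hx₂.le
  have hsin : 0 < Real.sin θ :=
    Real.sin_pos_of_pos_of_lt_pi (Real.arccos_pos.2 hx₂) (Real.arccos_lt_pi.2 hx₁)
  set z := Complex.exp (θ * Complex.I)
  set w := Complex.exp (-θ * Complex.I)
  have hzw : z * w = 1 := by simp [z, w, ← Complex.exp_add]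
  have hadd : z + w = 2 * x := by rw [← hcos, Complex.ofReal_cos, Complex.two_cos]
  refine isBigO_one_of_perturbed_rotation (u := fun n ↦ h (n + 1) - w * h n) (z := z)
    (Complex.norm_exp_ofReal_mul_I θ) hsin hc (fun n ↦ ?_) fun n ↦ ?_
  · have hrec : (h (n + 2) : ℂ) = 2 * x * h (n + 1) - (1 - c n) * h n := by exact_mod_cast hh n
    linear_combination hrec - h (n + 1) * hadd + h n * hzw
  · have hw : w.im = -Real.sin θ := by
      simpa only [w, Complex.ofReal_neg, Real.sin_neg] using Complex.exp_ofReal_mul_I_im (-θ)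
    simp [hw]

end Boundedness

section QPochhammer

variable {q : ℝ}

lemma one_sub_pow_nonneg (hq : |q| ≤ 1) (n : ℕ) : 0 ≤ 1 - q ^ n :=
  sub_nonneg.2 <| (le_abs_self _).trans <| abs_pow q n ▸ pow_le_one₀ (abs_nonneg q) hq

lemma multipliable_one_sub_mul_pow (a : ℝ) (hq : |q| < 1) :
    Multipliable fun k : ℕ ↦ 1 - a * q ^ k := by
  simpa only [sub_eq_add_neg] using Real.multipliable_one_add_of_summable
    ((summable_geometric_of_abs_lt_one hq).mul_left a).neg

lemma qPochInfA_eq_one_sub_mul (a : ℝ) (hq : |q| < 1) :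
    qPochInfA a q = (1 - a) * qPochInfA (a * q) q := by
  have hshift (k : ℕ) : 1 - a * q ^ (k + 1) = 1 - a * q * q ^ k := by ring
  have hprod := tprod_eq_zero_mul' (f := fun k : ℕ ↦ 1 - a * q ^ k)
    (by simpa only [hshift] using multipliable_one_sub_mul_pow (a * q) hq)
  simpa only [qPochInfA, hshift, pow_zero, mul_one] using hprod

lemma qPochInfA_le_exp (a : ℝ) (hq : |q| < 1) : qPochInfA a q ≤ Real.exp (|a| / (1 - |q|)) := by
  have hsum : HasSum (fun k : ℕ ↦ |a| * |q| ^ k) (|a| / (1 - |q|)) :=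
    (hasSum_geometric_of_lt_one (abs_nonneg q) hq).mul_left |a|
  refine (multipliable_one_sub_mul_pow a hq).tprod_le_of_prod_le fun s ↦ ?_
  calc ∏ k ∈ s, (1 - a * q ^ k) ≤ ∏ k ∈ s, |1 - a * q ^ k| :=
        (le_abs_self _).trans_eq (Finset.abs_prod _ _)
    _ ≤ ∏ k ∈ s, (1 + |a| * |q| ^ k) := by
        gcongr with k
        simpa only [abs_one, abs_mul, abs_pow] using abs_sub 1 (a * q ^ k)
    _ ≤ Real.exp (∑ k ∈ s, |a| * |q| ^ k) :=
        Real.prod_one_add_le_exp_sum s fun k ↦ by positivity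
    _ ≤ Real.exp (|a| / (1 - |q|)) :=
        Real.exp_le_exp.2 (sum_le_hasSum s (fun k _ ↦ by positivity) hsum)

end QPochhammer

section WaveFunction

variable {q : ℝ}

lemma qHermite_eval_succ (q : ℝ) (n : ℕ) (x : ℝ) :
    (qHermite q (n + 1)).eval x =
      2 * x * (qHermite q n).eval x - (1 - q ^ n) * (qHermite q (n - 1)).eval x := by
  cases n <;> simp [qHermite]

lemma isBigO_one_qHermite_eval (hq : |q| < 1) {x : ℝ} (hx : |x| < 1) :
    (fun n ↦ (qHermite q n).eval x) =O[atTop] fun _ ↦ (1 : ℝ) :=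
  isBigO_one_of_perturbed_chebyshev_recurrence hx
    ((summable_nat_add_iff 1).2 (summable_geometric_of_abs_lt_one hq))
    fun n ↦ qHermite_eval_succ q (n + 1) x

/-- The factor `α d_n⁻¹ ρ(x)^{1/2}` by which the wave function `ψ_n` differs from the polynomial
`H_n`, arranged so that `qWave q n x = qWaveFactor q n x * (qHermite q n).eval x` holds by
definition. -/
noncomputable def qWaveFactor (q : ℝ) (n : ℕ) (x : ℝ) : ℝ :=
  ((1 - q) / 2) ^ ((1 : ℝ) / 4) * √(qPochInfA (q ^ (n + 1)) q / (2 * π)) * √(qWeight q x)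

lemma qWave_eq (q : ℝ) (n : ℕ) (x : ℝ) :
    qWave q n x = qWaveFactor q n x * (qHermite q n).eval x := rfl

lemma qWaveFactor_eq_mul_succ (hq : |q| < 1) (n : ℕ) (x : ℝ) :
    qWaveFactor q n x = √(1 - q ^ (n + 1)) * qWaveFactor q (n + 1) x := by
  rw [qWaveFactor, qWaveFactor, qPochInfA_eq_one_sub_mul _ hq, ← pow_succ, mul_div_assoc,
    Real.sqrt_mul (one_sub_pow_nonneg hq.le _)]
  ring

lemma isBigO_one_qWaveFactor (hq : |q| < 1) (x : ℝ) :
    (fun n ↦ qWaveFactor q n x) =O[atTop] fun _ ↦ (1 : ℝ) := by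
  have hsqrt : (fun n ↦ √(qPochInfA (q ^ (n + 1)) q / (2 * π))) =O[atTop] fun _ ↦ (1 : ℝ) := by
    refine isBigO_one_nat_atTop_iff.2 ⟨√(Real.exp (1 / (1 - |q|)) / (2 * π)), fun n ↦ ?_⟩
    have hpow : |q ^ (n + 1)| ≤ 1 := abs_pow q _ ▸ pow_le_one₀ (abs_nonneg q) hq.le
    rw [Real.norm_of_nonneg (Real.sqrt_nonneg _)]
    gcongr
    refine (qPochInfA_le_exp _ hq).trans ?_
    have : 0 ≤ 1 - |q| := sub_nonneg.2 hq.le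
    gcongr
  simpa only [qWaveFactor, mul_right_comm] using
    hsqrt.const_mul_left (((1 - q) / 2) ^ ((1 : ℝ) / 4) * √(qWeight q x))

-- For `|x| > 1` this comes from the junk value `√(1 - x ^ 2) = 0` in `qWeight`.
lemma qWave_eq_zero_of_one_le_abs {x : ℝ} (hx : 1 ≤ |x|) (n : ℕ) : qWave q n x = 0 := by
  have hsq : 1 - x ^ 2 ≤ 0 := sub_nonpos.2 (one_le_sq_iff_one_le_abs x |>.2 hx)
  simp [qWave, qWeight, Real.sqrt_eq_zero_of_nonpos hsq]

lemma isBigO_one_qWave (hq : |q| < 1) (x : ℝ) :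
    (fun n ↦ qWave q n x) =O[atTop] fun _ ↦ (1 : ℝ) := by
  rcases lt_or_ge |x| 1 with hx | hx
  · simpa only [qWave_eq, mul_one] using
      (isBigO_one_qWaveFactor hq x).mul (isBigO_one_qHermite_eval hq hx)
  · simpa only [qWave_eq_zero_of_one_le_abs hx] using isBigO_zero _ _

lemma qE_zero (q : ℝ) : qE q 0 = 0 := by simp [qE]

lemma sqrt_qE (hq : q ≤ 1) (n : ℕ) : √(qE q n) = √(1 - q ^ n) / √(1 - q) :=
  Real.sqrt_div' _ (sub_nonneg.2 hq)

lemma isBigO_one_sqrt_qE (hq : |q| < 1) : (fun n ↦ √(qE q n)) =O[atTop] fun _ ↦ (1 : ℝ) :=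
  (((tendsto_pow_atTop_nhds_zero_of_abs_lt_one hq).const_sub 1).div_const (1 - q)).sqrt.isBigO_one ℝ

lemma sqrt_qE_mul_qWave_succ (hq : |q| < 1) (n : ℕ) (x : ℝ) :
    √(qE q (n + 1)) * qWave q (n + 1) x =
      qWaveFactor q n x * (qHermite q (n + 1)).eval x / √(1 - q) := by
  rw [sqrt_qE (abs_lt.1 hq).2.le, qWave_eq, qWaveFactor_eq_mul_succ hq n]
  ring

lemma sqrt_qE_mul_qWave_pred (hq : |q| < 1) (n : ℕ) (x : ℝ) :
    √(qE q n) * qWave q (n - 1) x =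
      qWaveFactor q n x * ((1 - q ^ n) * (qHermite q (n - 1)).eval x) / √(1 - q) := by
  cases n with
  | zero => simp [qE_zero]
  | succ n =>
    rw [Nat.add_sub_cancel, sqrt_qE (abs_lt.1 hq).2.le, qWave_eq, qWaveFactor_eq_mul_succ hq n]
    have hsq := Real.mul_self_sqrt (one_sub_pow_nonneg hq.le (n + 1))
    linear_combination
      qWaveFactor q (n + 1) x * (qHermite q n).eval x / √(1 - q) * hsq

theorem qWave_recurrence (hq : |q| < 1) (n : ℕ) (x : ℝ) :
    √(qE q (n + 1)) * qWave q (n + 1) x + √(qE q n) * qWave q (n - 1) x =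
      2 / √(1 - q) * x * qWave q n x := by
  rw [sqrt_qE_mul_qWave_succ hq, sqrt_qE_mul_qWave_pred hq, qHermite_eval_succ, qWave_eq]
  ring

end WaveFunction

section Kernel

variable {q : ℝ} {t : ℂ}

lemma summable_pow_mul_sqrt_qE_mul_qWave_succ (hq : |q| < 1) (ht : ‖t‖ < 1) (x y : ℝ) :
    Summable fun n : ℕ ↦
      t ^ n * ((√(qE q (n + 1)) : ℂ) * (qWave q (n + 1) x : ℂ)) * (qWave q n y : ℂ) := by
  have hsucc : (fun n ↦ √(qE q (n + 1)) * qWave q (n + 1) x) =O[atTop] fun _ ↦ (1 : ℝ) := by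
    simpa only [Function.comp_def, mul_one] using
      ((isBigO_one_sqrt_qE hq).mul (isBigO_one_qWave hq x)).comp_tendsto (tendsto_add_atTop_nat 1)
  have hbdd : (fun n ↦ ((√(qE q (n + 1)) * qWave q (n + 1) x * qWave q n y : ℝ) : ℂ))
      =O[atTop] fun _ ↦ (1 : ℝ) := by
    simpa only [mul_one] using Complex.isBigO_ofReal_left.2 (hsucc.mul (isBigO_one_qWave hq y))
  simpa only [Complex.ofReal_mul, mul_assoc] using summable_pow_mul_of_isBigO_one ht hbdd

theorem one_sub_sq_mul_tsum_qWave (hq : |q| < 1) (ht : ‖t‖ < 1) (x y : ℝ) :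
    (1 - t ^ 2) * ∑' n : ℕ, t ^ n *
        ((√(qE q n) * qWave q (n - 1) x - √(qE q (n + 1)) * qWave q (n + 1) x : ℝ) : ℂ) *
        (qWave q n y : ℂ) =
      2 / (√(1 - q) : ℂ) * (2 * t * y - (1 + t ^ 2) * x) *
        ∑' n : ℕ, t ^ n * (qWave q n x : ℂ) * (qWave q n y : ℂ) := by
  have hrec (z : ℝ) (n : ℕ) : (√(qE q (n + 1)) : ℂ) * (qWave q (n + 1) z : ℂ) +
      (√(qE q n) : ℂ) * (qWave q (n - 1) z : ℂ) = 2 / (√(1 - q) : ℂ) * z * (qWave q n z : ℂ) := by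
    exact_mod_cast qWave_recurrence hq n z
  have key := one_sub_sq_mul_tsum_of_recurrence (a := fun n ↦ (√(qE q n) : ℂ))
    (u := fun n ↦ (qWave q n x : ℂ)) (v := fun n ↦ (qWave q n y : ℂ)) (by simp [qE_zero])
    (hrec x) (hrec y) (summable_pow_mul_sqrt_qE_mul_qWave_succ hq ht x y)
    (summable_pow_mul_sqrt_qE_mul_qWave_succ hq ht y x)
  push_cast
  rw [key]
  ring

theorem qKernel_momentum_eigen_general (hq : |q| < 1) (ht : ‖t‖ < 1) (x y : ℝ) :
    (√(2 / (1 - q)) : ℂ) *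
      ∑' n : ℕ, t ^ n *
        ((√(1 - q) : ℂ) / (2 * Complex.I) *
          ((√(qE q n) * qWave q (n - 1) x - √(qE q (n + 1)) * qWave q (n + 1) x : ℝ) : ℂ)) *
        (qWave q n y : ℂ) =
    (2 * t * (y : ℂ) - (1 + t ^ 2) * (x : ℂ)) / (Complex.I * (1 - t ^ 2)) *
      qKernel q t x y := by
  have hr : (√(1 - q) : ℂ) ≠ 0 :=
    Complex.ofReal_ne_zero.2 (Real.sqrt_pos.2 (sub_pos.2 (abs_lt.1 hq).2)).ne'
  have ht2 : 1 - t ^ 2 ≠ 0 := sub_ne_zero.2 fun h ↦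
    (pow_lt_one₀ (norm_nonneg t) ht two_ne_zero).ne (by rw [← norm_pow, ← h, norm_one])
  have hP := one_sub_sq_mul_tsum_qWave hq ht x y
  simp only [qKernel, mul_left_comm (t ^ _), mul_assoc (_ / (2 * Complex.I)), tsum_mul_left]
  field_simp at hP ⊢
  linear_combination (√(2 / (1 - q)) : ℂ) * hP

end Kernel

/-- Eigenvalue equation for the momentum operator
`P = (√(1-q)/(2i))(q^{N/2} b - b⁺ q^{N/2})`, applied termwise in `x`, on the kernel:
`P_x K_t(x,y;q) = (2ty - (1+t²)x)/(i(1-t²)) · K_t(x,y;q)`. -/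
theorem qKernel_momentum_eigen (q : ℝ) (hq0 : 0 < q) (hq1 : q < 1)
    (t : ℂ) (ht : ‖t‖ < 1) (ht2 : t ^ 2 ≠ 1) (x y : ℝ) :
    (Real.sqrt (2 / (1 - q)) : ℂ) *
      ∑' n : ℕ, t ^ n *
        ((Real.sqrt (1 - q) : ℂ) / (2 * Complex.I) *
          ((Real.sqrt (qE q n) * qWave q (n - 1) x -
            Real.sqrt (qE q (n + 1)) * qWave q (n + 1) x : ℝ) : ℂ)) *
        (qWave q n y : ℂ) =
    (2 * t * (y : ℂ) - (1 + t ^ 2) * (x : ℂ)) / (Complex.I * (1 - t ^ 2)) *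
      qKernel q t x y := by
  exact qKernel_momentum_eigen_general (abs_lt.2 ⟨by linarith, hq1⟩) ht x y
end
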